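/- Let n ≥ 3 be odd and let f : ℝⁿ → ℝ be a smooth function whose support is a compact subset of the open unit ball B = {x ∈ ℝⁿ : |x| < 1}. For θ ∈ S^{n-1} let φ_θ(t) = (Mf)(θ,t) be the spherical mean of f, and set g_θ(t) = D^{n-3}[t ↦ t^{n-2} φ_θ(t)](t) for t > 0. Then for every x ∈ B one has f(x) = c_n · Δ_x [ x ↦ ∫_{S^{n-1}} g_θ(|x−θ|) dθ ](x), where Δ is the Laplacian in x and c_n = (−1)^{(n−1)/2} / (4 π^{n/2−1} Γ(n/2)). -/

import Mathlib

open MeasureTheory Metric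

/-- The surface measure on the unit sphere `S^{n-1}` in `ℝⁿ`. -/
noncomputable def sphereMeasure (n : ℕ) : Measure (sphere (0 : EuclideanSpace ℝ (Fin n)) 1) :=
  (volume : Measure (EuclideanSpace ℝ (Fin n))).toSphere

/-- The operator `D = (1/(2t)) d/dt`. -/
noncomputable def Dop (g : ℝ → ℝ) : ℝ → ℝ := fun t => (1 / (2 * t)) * deriv g t

/-- The Laplacian `Δ f = ∑ ∂²f/∂x_i²` on `ℝⁿ`. -/
noncomputable def lap {n : ℕ} (f : EuclideanSpace ℝ (Fin n) → ℝ)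
    (x : EuclideanSpace ℝ (Fin n)) : ℝ :=
  ∑ i : Fin n, iteratedFDeriv ℝ 2 f x ![EuclideanSpace.single i 1, EuclideanSpace.single i 1]

section Aux
open Set


section polar
variable {E : Type*} [NormedAddCommGroup E] [NormedSpace ℝ E] [MeasurableSpace E]
  [FiniteDimensional ℝ E] [BorelSpace E] [Nontrivial E] (μ : Measure E) [μ.IsAddHaarMeasure]

theorem polar_prod (F : E → ℝ) : ∫ x, F x ∂μ =
    ∫ p, F ((p.2 : ℝ) • (p.1 : E)) ∂(μ.toSphere.prod (Measure.volumeIoiPow (Module.finrank ℝ E - 1))) := by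
  calc ∫ x, F x ∂μ = ∫ x : ({(0)}ᶜ : Set E), F x ∂(μ.comap (↑)) := by
        rw [integral_subtype_comap (measurableSet_singleton _).compl F,
          restrict_compl_singleton]
    _ = _ := by
      rw [← μ.measurePreserving_homeomorphUnitSphereProd.integral_comp
        (Homeomorph.measurableEmbedding _) ]
      congr 1
      ext x
      congr 1
      simp [smul_smul, norm_ne_zero_iff.2 x.2]

theorem polar_integrable {F : E → ℝ} (hF : Integrable F μ) :
    Integrable (fun p : sphere (0 : E) 1 × Ioi (0:ℝ) => F ((p.2 : ℝ) • (p.1 : E)))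
      (μ.toSphere.prod (Measure.volumeIoiPow (Module.finrank ℝ E - 1))) := by
  rw [← μ.measurePreserving_homeomorphUnitSphereProd.integrable_comp_emb
    (Homeomorph.measurableEmbedding _)]
  rw [← restrict_compl_singleton (μ := μ) 0, ← IntegrableOn,
    integrableOn_iff_comap_subtypeVal (by measurability)] at hF
  convert hF using 1
  ext x
  simp [smul_smul, norm_ne_zero_iff.2 x.2]

theorem integral_volumeIoiPow (m : ℕ) (q : ℝ → ℝ) :
    ∫ r : Ioi (0:ℝ), q r ∂(Measure.volumeIoiPow m) = ∫ r in Ioi (0:ℝ), r ^ m * q r := by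
  rw [Measure.volumeIoiPow]
  simp only [ENNReal.ofReal]
  rw [integral_withDensity_eq_integral_smul (by fun_prop),
    integral_subtype_comap measurableSet_Ioi fun a ↦ Real.toNNReal (a ^ m) • q a]
  refine setIntegral_congr_fun measurableSet_Ioi fun x hx ↦ ?_
  have : (0:ℝ) ≤ x := le_of_lt hx
  simp [NNReal.smul_def, Real.coe_toNNReal _ (pow_nonneg this _)]

theorem polar1 {F : E → ℝ} (hF : Integrable F μ) : ∫ x, F x ∂μ =
    ∫ θ : sphere (0 : E) 1, (∫ r in Ioi (0:ℝ), r ^ (Module.finrank ℝ E - 1) * F (r • (θ : E))) ∂μ.toSphere := by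
  rw [polar_prod, integral_prod _ (polar_integrable μ hF)]
  congr 1; ext θ
  exact integral_volumeIoiPow _ (fun r => F (r • (θ : E)))

theorem polar2 {F : E → ℝ} (hF : Integrable F μ) : ∫ x, F x ∂μ =
    ∫ r in Ioi (0:ℝ), r ^ (Module.finrank ℝ E - 1) * ∫ θ : sphere (0 : E) 1, F (r • (θ : E)) ∂μ.toSphere := by
  rw [polar_prod, integral_prod_symm _ (polar_integrable μ hF)]
  exact integral_volumeIoiPow _ (fun r => ∫ θ : sphere (0 : E) 1, F (r • (θ : E)) ∂μ.toSphere)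
end polar



theorem gauss_moment_pos (m : ℕ) : 0 < ∫ r in Ioi (0:ℝ), r ^ m * Real.exp (-r ^ 2) := by
  have h := integral_rpow_mul_exp_neg_rpow (p := 2) (q := m) (by norm_num) (by
    have : (0:ℝ) ≤ m := Nat.cast_nonneg m
    linarith)
  simp only [Real.rpow_natCast, Real.rpow_two] at h
  rw [h]
  have : 0 < Real.Gamma (((m:ℝ)+1)/2) := Real.Gamma_pos_of_pos (by positivity)
  positivity

theorem gauss_moment_integrable (m : ℕ) :
    IntegrableOn (fun r : ℝ => r ^ m * Real.exp (-r ^ 2)) (Ioi 0) := by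
  have h := integrableOn_rpow_mul_exp_neg_mul_sq (b := 1) one_pos (s := m) (by
    have : (0:ℝ) ≤ m := Nat.cast_nonneg m
    linarith)
  simpa using h

theorem gauss_integrable_E {E : Type*} [NormedAddCommGroup E] [NormedSpace ℝ E] [MeasurableSpace E]
  [FiniteDimensional ℝ E] [BorelSpace E] [Nontrivial E] (μ : Measure E) [μ.IsAddHaarMeasure] :
    Integrable (fun x : E => Real.exp (-‖x‖ ^ 2)) μ := by
  rw [integrable_fun_norm_addHaar μ (f := fun r => Real.exp (-r ^ 2))]
  exact gauss_moment_integrable _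

theorem exists_iso_slice (k : ℕ) (e : EuclideanSpace ℝ (Fin (2 * k + 3))) (he : ‖e‖ = 1) :
    ∃ L : EuclideanSpace ℝ (Fin (2 * k + 3)) ≃ₗᵢ[ℝ]
      WithLp 2 (ℝ × EuclideanSpace ℝ (Fin (2 * k + 2))), L e = WithLp.toLp 2 (1, 0) := by
  have hd : Module.finrank ℝ (WithLp 2 (ℝ × EuclideanSpace ℝ (Fin (2 * k + 2)))) = 2 * k + 3 := by
    rw [(WithLp.linearEquiv 2 ℝ (ℝ × EuclideanSpace ℝ (Fin (2 * k + 2)))).finrank_eq,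
      Module.finrank_prod]
    simp; omega
  let L0 := ((stdOrthonormalBasis ℝ (WithLp 2 (ℝ × EuclideanSpace ℝ (Fin (2 * k + 2))))).reindex
    (finCongr hd)).repr.symm
  have hn : ‖L0 e‖ = ‖(WithLp.toLp 2 (1, 0) : WithLp 2 (ℝ × EuclideanSpace ℝ (Fin (2 * k + 2))))‖ := by
    rw [LinearIsometryEquiv.norm_map, he]
    simp
  refine ⟨L0.trans (Submodule.reflection
    (Submodule.span ℝ {L0 e - WithLp.toLp 2 ((1:ℝ), (0 : EuclideanSpace ℝ (Fin (2 * k + 2))))})ᗮ), ?_⟩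
  exact Submodule.reflection_sub hn

theorem slice_aux2 (k : ℕ) (h : ℝ → ℝ) (hc : Continuous h) (C : ℝ) (hC : ∀ s ∈ Icc (-1:ℝ) 1, |h s| ≤ C) :
    ∫ s : ℝ, ∫ ρ in Ioi (0:ℝ), ρ ^ (2 * k + 1) * (Real.exp (-(s ^ 2 + ρ ^ 2)) * h (s / √(s ^ 2 + ρ ^ 2)))
    = (∫ r in Ioi (0:ℝ), r ^ (2 * k + 2) * Real.exp (-r ^ 2)) * ∫ s in (-1:ℝ)..1, h s * (1 - s ^ 2) ^ k := by
  let f : ℝ × ℝ → ℝ := fun p => (Ioi (0:ℝ)).indicator (fun ρ => ρ ^ (2 * k + 1) *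
    (Real.exp (-(p.1 ^ 2 + ρ ^ 2)) * h (p.1 / √(p.1 ^ 2 + ρ ^ 2)))) p.2
  have hfint : Integrable f := by
    have h1 : Integrable (fun p : ℝ × ℝ => Real.exp (-p.1 ^ 2) *
        (Ioi (0:ℝ)).indicator (fun ρ => ρ ^ (2 * k + 1) * Real.exp (-ρ ^ 2)) p.2) := by
      refine Integrable.mul_prod (f := fun s : ℝ => Real.exp (-s ^ 2))
        (g := (Ioi (0:ℝ)).indicator (fun ρ => ρ ^ (2 * k + 1) * Real.exp (-ρ ^ 2))) ?_ ?_
      · simpa using integrable_exp_neg_mul_sq one_pos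
      · rw [integrable_indicator_iff measurableSet_Ioi]
        exact gauss_moment_integrable _
    have h2 := h1.mul_bdd (g := fun p : ℝ × ℝ => h (p.1 / √(p.1 ^ 2 + p.2 ^ 2))) (c := C)
      (by
        apply Measurable.aestronglyMeasurable
        apply hc.measurable.comp
        fun_prop) (by
        refine Filter.Eventually.of_forall fun p => hC _ ?_
        rw [mem_Icc, ← abs_le, abs_div, abs_of_nonneg (Real.sqrt_nonneg _)]
        apply div_le_one_of_le₀ _ (Real.sqrt_nonneg _)
        apply Real.abs_le_sqrt
        nlinarith [sq_nonneg p.2])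
    refine h2.congr (Filter.Eventually.of_forall fun p => ?_)
    simp only [f, indicator]
    split_ifs
    · rw [neg_add, Real.exp_add]; ring
    · simp
  calc _ = ∫ s : ℝ, ∫ ρ : ℝ, f (s, ρ) := by
        congr 1; ext s
        rw [← integral_indicator measurableSet_Ioi]
    _ = ∫ p, f p := by
        rw [Measure.volume_eq_prod, integral_prod _ hfint]
    _ = ∫ p in Ioi (0:ℝ) ×ˢ Ioo (-Real.pi) Real.pi, (p.1 ^ (2 * k + 2) * Real.exp (-p.1 ^ 2)) *
          (Ioo 0 Real.pi).indicator (fun α => Real.sin α ^ (2 * k + 1) * h (Real.cos α)) p.2 := by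
        rw [← integral_comp_polarCoord_symm, polarCoord_target]
        refine setIntegral_congr_fun (measurableSet_Ioi.prod measurableSet_Ioo) fun p hp => ?_
        obtain ⟨r, α⟩ := p
        simp only [mem_prod, mem_Ioi, mem_Ioo] at hp
        obtain ⟨hr, hα1, hα2⟩ := hp
        simp only [polarCoord_symm_apply, f, smul_eq_mul, indicator, mem_Ioi, mem_Ioo]
        have hsq : (r * Real.cos α) ^ 2 + (r * Real.sin α) ^ 2 = r ^ 2 := by
          nlinarith [Real.sin_sq_add_cos_sq α]
        by_cases h0 : 0 < α
        · have : 0 < Real.sin α := Real.sin_pos_of_pos_of_lt_pi h0 hα2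
          rw [if_pos (by positivity), if_pos ⟨h0, hα2⟩, hsq, Real.sqrt_sq hr.le]
          rw [mul_div_cancel_left₀ _ hr.ne']
          ring
        · have : Real.sin α ≤ 0 := Real.sin_nonpos_of_nonpos_of_neg_pi_le (not_lt.1 h0) hα1.le
          rw [if_neg (by nlinarith), if_neg (fun h => h0 h.1)]
          simp
    _ = (∫ r in Ioi (0:ℝ), r ^ (2 * k + 2) * Real.exp (-r ^ 2)) *
        ∫ α in Ioo (-Real.pi) Real.pi, (Ioo 0 Real.pi).indicator (fun α => Real.sin α ^ (2 * k + 1) * h (Real.cos α)) α := by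
        rw [Measure.volume_eq_prod]
        exact setIntegral_prod_mul (fun r : ℝ => r ^ (2 * k + 2) * Real.exp (-r ^ 2)) _ _ _
    _ = _ := by
        congr 1
        rw [setIntegral_indicator measurableSet_Ioo]
        have : Ioo (-Real.pi) Real.pi ∩ Ioo 0 Real.pi = Ioo 0 Real.pi := by
          apply inter_eq_right.2
          apply Ioo_subset_Ioo_left
          linarith [Real.pi_pos]
        rw [this, ← integral_Ioc_eq_integral_Ioo, ← intervalIntegral.integral_of_le Real.pi_pos.le]
        have := intervalIntegral.integral_comp_mul_deriv (a := 0) (b := Real.pi) (f := Real.cos)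
          (f' := fun x => - Real.sin x) (g := fun s => h s * (1 - s ^ 2) ^ k)
          (fun x _ => Real.hasDerivAt_cos x) (by fun_prop) (by fun_prop)
        simp only [Real.cos_zero, Real.cos_pi] at this
        rw [intervalIntegral.integral_symm (1:ℝ) (-1), ← this, ← intervalIntegral.integral_neg]
        congr 1; ext x
        simp only [Function.comp]
        rw [← Real.sin_sq]
        ring

theorem slice (k : ℕ) (h : ℝ → ℝ) (hc : Continuous h) (e : EuclideanSpace ℝ (Fin (2 * k + 3)))
    (he : ‖e‖ = 1) :
    ∫ θ : sphere (0 : EuclideanSpace ℝ (Fin (2 * k + 3))) 1, h (inner ℝ (θ : EuclideanSpace ℝ (Fin (2 * k + 3))) e)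
      ∂(sphereMeasure (2 * k + 3)) =
    (2 * Real.pi ^ (k + 1) / k.factorial) * ∫ s in (-1:ℝ)..1, h s * (1 - s ^ 2) ^ k := by
  obtain ⟨C, hC⟩ := (isCompact_Icc (a := (-1:ℝ)) (b := 1)).exists_bound_of_continuousOn hc.continuousOn
  simp only [Real.norm_eq_abs] at hC
  set J := ∫ r in Ioi (0:ℝ), r ^ (2 * k + 2) * Real.exp (-r ^ 2) with hJ
  have hJ0 : 0 < J := gauss_moment_pos _
  let F : EuclideanSpace ℝ (Fin (2 * k + 3)) → ℝ := fun x => Real.exp (-‖x‖ ^ 2) * h (inner ℝ x e / ‖x‖)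
  have hF : Integrable F := by
    refine (gauss_integrable_E volume).mul_bdd (c := C) ?_ ?_
    · apply Measurable.aestronglyMeasurable
      apply hc.measurable.comp
      fun_prop
    · refine Filter.Eventually.of_forall fun x => hC _ ?_
      rw [mem_Icc, ← abs_le, abs_div, abs_of_nonneg (norm_nonneg _)]
      apply div_le_one_of_le₀ _ (norm_nonneg _)
      simpa [he] using abs_real_inner_le_norm x e
  have h1 : ∫ x, F x = J * ∫ θ : sphere (0 : EuclideanSpace ℝ (Fin (2 * k + 3))) 1,
      h (inner ℝ (θ : EuclideanSpace ℝ (Fin (2 * k + 3))) e) ∂(sphereMeasure (2 * k + 3)) := by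
    rw [polar2 volume hF, finrank_euclideanSpace_fin, hJ, ← integral_mul_const]
    refine setIntegral_congr_fun measurableSet_Ioi fun r hr => ?_
    have hr : 0 < r := hr
    simp only [F, sphereMeasure]
    rw [mul_assoc, ← integral_const_mul, ← integral_const_mul, ← integral_const_mul]
    refine integral_congr_ae (Filter.Eventually.of_forall fun θ => ?_)
    have : ‖(θ : EuclideanSpace ℝ (Fin (2 * k + 3)))‖ = 1 := norm_eq_of_mem_sphere θ
    simp only []
    rw [norm_smul, this, real_inner_smul_left, Real.norm_of_nonneg hr.le, mul_one, mul_div_cancel_left₀ _ hr.ne']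
    rfl
  obtain ⟨L, hL⟩ := exists_iso_slice k e he
  let V := EuclideanSpace ℝ (Fin (2 * k + 2))
  have hmp : MeasurePreserving (fun x => WithLp.ofLp (L x)) (volume : Measure (EuclideanSpace ℝ (Fin (2 * k + 3))))
    (volume : Measure (ℝ × V)) := (WithLp.volume_preserving_ofLp ℝ V).comp L.measurePreserving
  have hme : MeasurableEmbedding (fun x => (WithLp.ofLp (L x) : ℝ × V)) :=
    (MeasurableEquiv.toLp 2 (ℝ × V)).symm.measurableEmbedding.comp L.toHomeomorph.measurableEmbedding
  let F2 : ℝ × V → ℝ := fun p => Real.exp (-(p.1 ^ 2 + ‖p.2‖ ^ 2)) * h (p.1 / √(p.1 ^ 2 + ‖p.2‖ ^ 2))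
  have hFF : ∀ x, F2 (WithLp.ofLp (L x)) = F x := by
    intro x
    have hn : (WithLp.ofLp (L x)).1 ^ 2 + ‖(WithLp.ofLp (L x)).2‖ ^ 2 = ‖x‖ ^ 2 := by
      rw [← L.norm_map x, WithLp.prod_norm_sq_eq_of_L2]
      simp
    have hi : (WithLp.ofLp (L x)).1 = inner ℝ x e := by
      rw [← L.inner_map_map x e, hL, WithLp.prod_inner_apply]
      simp
    simp only [F2, F]
    rw [hn, Real.sqrt_sq (norm_nonneg x), hi]
  have h2 : ∫ x, F x = ∫ p, F2 p := by
    rw [← hmp.integral_comp hme]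
    simp only [hFF]
  have hF2 : Integrable F2 := by
    rw [← hmp.integrable_comp_emb hme]
    exact hF.congr (Filter.Eventually.of_forall fun x => (hFF x).symm)
  have h3 : ∫ p, F2 p = (2 * Real.pi ^ (k + 1) / k.factorial) * (J * ∫ s in (-1:ℝ)..1, h s * (1 - s ^ 2) ^ k) := by
    rw [hJ, ← slice_aux2 k h hc C hC, Measure.volume_eq_prod, integral_prod _ hF2, ← integral_const_mul]
    congr 1; ext s
    have := integral_fun_norm_addHaar (volume : Measure V) (fun ρ => Real.exp (-(s ^ 2 + ρ ^ 2)) * h (s / √(s ^ 2 + ρ ^ 2)))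
    simp only [F2]
    rw [this, finrank_euclideanSpace_fin]
    have hv : (2 * k + 2) * (volume : Measure V).real (ball 0 1) = 2 * Real.pi ^ (k + 1) / k.factorial := by
      rw [measureReal_def, InnerProductSpace.volume_ball_of_dim_even (k := k + 1) (by simp [V]; ring)]
      rw [ENNReal.ofReal_one, one_pow, one_mul, ENNReal.toReal_ofReal (by positivity), Nat.factorial_succ]
      push_cast
      field_simp
    rw [← hv]
    simp only [smul_eq_mul, nsmul_eq_mul]
    push_cast
    rw [mul_assoc]
  have := h1.symm.trans (h2.trans h3)
  have h4 : J * ∫ θ : sphere (0 : EuclideanSpace ℝ (Fin (2 * k + 3))) 1,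
      h (inner ℝ (θ : EuclideanSpace ℝ (Fin (2 * k + 3))) e) ∂(sphereMeasure (2 * k + 3)) =
      J * ((2 * Real.pi ^ (k + 1) / k.factorial) * ∫ s in (-1:ℝ)..1, h s * (1 - s ^ 2) ^ k) := by
    rw [this]; ring
  exact mul_left_cancel₀ hJ0.ne' h4


/-- negative powers of the norm are locally integrable -/
lemma locInt_norm_pow (k m : ℕ) (hm : m ≤ 2*k+2) :
    LocallyIntegrable (fun v : EuclideanSpace ℝ (Fin (2*k+3)) => (‖v‖^m)⁻¹) := by
  rw [locallyIntegrable_iff]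
  intro K hK
  obtain ⟨R, hR⟩ := hK.isBounded.subset_ball (0 : EuclideanSpace ℝ (Fin (2*k+3)))
  refine IntegrableOn.mono_set ?_ hR
  rw [integrableOn_fun_norm_addHaar (E := EuclideanSpace ℝ (Fin (2*k+3))) volume
    (f := fun r : ℝ => (r^m)⁻¹)]
  have h : IntegrableOn (fun y : ℝ => y^(2*k+2-m)) (Ioo 0 R) :=
    ((continuous_pow _).integrableOn_Icc (a := 0) (b := R)).mono_set Ioo_subset_Icc_self
  refine h.congr_fun ?_ measurableSet_Ioo
  intro y hy
  have hy0 : y ≠ 0 := hy.1.ne'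
  simp only [finrank_euclideanSpace_fin, smul_eq_mul]
  rw [show 2*k+3-1 = (2*k+2-m) + m by omega, pow_add, mul_assoc, mul_inv_cancel₀ (pow_ne_zero _ hy0), mul_one]

lemma integrable_mul_norm_pow (k m : ℕ) (p : EuclideanSpace ℝ (Fin (2*k+3)) → ℝ) (hm : m ≤ 2*k+2)
    (hp : Continuous p) (hpc : HasCompactSupport p) :
    Integrable (fun v => p v * (‖v‖^m)⁻¹) := by
  have := (locInt_norm_pow k m hm).integrable_smul_right_of_hasCompactSupport hp hpc
  simpa [smul_eq_mul, mul_comm] using this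

/-- Newton potential -/
noncomputable def newt (k : ℕ) (f : EuclideanSpace ℝ (Fin (2*k+3)) → ℝ)
    (z : EuclideanSpace ℝ (Fin (2*k+3))) : ℝ := ∫ v, f (z + v) * (‖v‖^(2*k+1))⁻¹

lemma newt_eq_conv (k : ℕ) (f : EuclideanSpace ℝ (Fin (2*k+3)) → ℝ) :
    newt k f = convolution (fun v : EuclideanSpace ℝ (Fin (2*k+3)) => (‖v‖^(2*k+1))⁻¹) f
      (ContinuousLinearMap.mul ℝ ℝ) volume := by
  ext z
  rw [newt, convolution_def, ← integral_neg_eq_self]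
  refine integral_congr_ae (Filter.Eventually.of_forall fun v => ?_)
  simp [sub_eq_add_neg, mul_comm]

lemma fderiv_newt (k : ℕ) (f : EuclideanSpace ℝ (Fin (2*k+3)) → ℝ) (hf : ContDiff ℝ 1 f)
    (hc : HasCompactSupport f) (z w : EuclideanSpace ℝ (Fin (2*k+3))) :
    fderiv ℝ (newt k f) z w = newt k (fun y => fderiv ℝ f y w) z := by
  have hK := locInt_norm_pow k (2*k+1) (by omega)
  rw [newt_eq_conv, newt_eq_conv, (hc.hasFDerivAt_convolution_right _ hK hf z).fderiv,
    convolution_precompR_apply _ hK (hc.fderiv ℝ) (hf.continuous_fderiv one_ne_zero)]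

lemma contDiff_newt (k : ℕ) (f : EuclideanSpace ℝ (Fin (2*k+3)) → ℝ) (m : ℕ∞) (hf : ContDiff ℝ m f)
    (hc : HasCompactSupport f) : ContDiff ℝ m (newt k f) := by
  rw [newt_eq_conv]
  exact hc.contDiff_convolution_right _ (locInt_norm_pow k (2*k+1) (by omega)) hf

lemma lap_eq_sum {n : ℕ} (f : EuclideanSpace ℝ (Fin n) → ℝ) (hf : ContDiff ℝ 2 f)
    (z : EuclideanSpace ℝ (Fin n)) :
    lap f z = ∑ i : Fin n, fderiv ℝ (fun y => fderiv ℝ f y (EuclideanSpace.single i 1)) z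
      (EuclideanSpace.single i 1) := by
  unfold lap
  refine Finset.sum_congr rfl fun i _ => ?_
  rw [iteratedFDeriv_two_apply]
  have h1 : DifferentiableAt ℝ (fderiv ℝ f) z :=
    ((hf.fderiv_right (m := 1) (by norm_num)).differentiable one_ne_zero) z
  rw [fderiv_clm_apply h1 (differentiableAt_const _)]
  simp

lemma lap_newt (k : ℕ) (f : EuclideanSpace ℝ (Fin (2*k+3)) → ℝ) (hf : ContDiff ℝ 2 f)
    (hc : HasCompactSupport f) (z : EuclideanSpace ℝ (Fin (2*k+3))) :
    lap (newt k f) z = ∑ i : Fin (2*k+3), newt k (fun x => fderiv ℝ (fun y => fderiv ℝ f y (EuclideanSpace.single i 1)) x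
      (EuclideanSpace.single i 1)) z := by
  rw [lap_eq_sum _ (contDiff_newt k f 2 hf hc)]
  refine Finset.sum_congr rfl fun i _ => ?_
  have h1 : (fun y => fderiv ℝ (newt k f) y (EuclideanSpace.single i 1)) =
    newt k (fun y => fderiv ℝ f y (EuclideanSpace.single i 1)) := by
    ext y; exact fderiv_newt k f (hf.of_le (by norm_num)) hc y _
  rw [h1, fderiv_newt]
  · exact (hf.fderiv_right (m := 1) (by norm_num)).clm_apply contDiff_const
  · exact hc.fderiv_apply ℝ _

/-- IBP with regularised kernel. -/
lemma ibp_eps (k : ℕ) (q : EuclideanSpace ℝ (Fin (2*k+3)) → ℝ) (hq : ContDiff ℝ 1 q)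
    (hc : HasCompactSupport q) (e : EuclideanSpace ℝ (Fin (2*k+3))) (ε : ℝ) (hε : 0 < ε) :
    ∫ v, fderiv ℝ q v e * ((√(‖v‖^2+ε))^(2*k+1))⁻¹ =
      (2*k+1) * ∫ v, q v * (inner ℝ v e * ((√(‖v‖^2+ε))^(2*k+3))⁻¹) := by
  have hpos : ∀ v : EuclideanSpace ℝ (Fin (2*k+3)), 0 < ‖v‖^2+ε := fun v => by positivity
  have hd : ∀ v : EuclideanSpace ℝ (Fin (2*k+3)), HasFDerivAt
      (fun v : EuclideanSpace ℝ (Fin (2*k+3)) => ((√(‖v‖^2+ε))^(2*k+1))⁻¹)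
      ((-(2*k+1) * ((√(‖v‖^2+ε))^(2*k+3))⁻¹) • innerSL ℝ v) v := by
    intro v
    have h1 : HasFDerivAt (fun v : EuclideanSpace ℝ (Fin (2*k+3)) => ‖v‖^2+ε) (2 • innerSL ℝ v) v :=
      ((hasStrictFDerivAt_norm_sq v).hasFDerivAt).add_const _
    have h2 := (((Real.hasDerivAt_sqrt (hpos v).ne').pow (2*k+1)).inv
      (pow_ne_zero _ (Real.sqrt_pos.2 (hpos v)).ne')).comp_hasFDerivAt v h1
    refine h2.congr_fderiv ?_
    have hs := (Real.sqrt_pos.2 (hpos v)).ne'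
    ext w
    simp
    field_simp
    ring
  have hcont : Continuous (fun v : EuclideanSpace ℝ (Fin (2*k+3)) => ((√(‖v‖^2+ε))^(2*k+1))⁻¹) := by
    refine Continuous.inv₀ (by fun_prop) fun v => pow_ne_zero _ (Real.sqrt_pos.2 (hpos v)).ne'
  have hcont3 : Continuous (fun v : EuclideanSpace ℝ (Fin (2*k+3)) => ((√(‖v‖^2+ε))^(2*k+3))⁻¹) := by
    refine Continuous.inv₀ (by fun_prop) fun v => pow_ne_zero _ (Real.sqrt_pos.2 (hpos v)).ne'
  have hfd : ∀ v, fderiv ℝ (fun v : EuclideanSpace ℝ (Fin (2*k+3)) => ((√(‖v‖^2+ε))^(2*k+1))⁻¹) v e =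
      (-(2*k+1)) * (inner ℝ v e * ((√(‖v‖^2+ε))^(2*k+3))⁻¹) := by
    intro v
    rw [(hd v).fderiv]
    simp
    ring
  have hq1 : Continuous (fun v => fderiv ℝ q v e) :=
    (hq.continuous_fderiv one_ne_zero).clm_apply continuous_const
  have key := integral_mul_fderiv_eq_neg_fderiv_mul_of_integrable (𝕜 := ℝ) (μ := volume) (v := e)
    (f := q) (g := (fun v : EuclideanSpace ℝ (Fin (2*k+3)) => ((√(‖v‖^2+ε))^(2*k+1))⁻¹))
    ((hq1.mul hcont).integrable_of_hasCompactSupport ((hc.fderiv_apply ℝ e).mul_right))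
    (by simp_rw [hfd]
        refine (hq.continuous.mul (continuous_const.mul ?_)).integrable_of_hasCompactSupport hc.mul_right
        exact (continuous_id.inner continuous_const).mul hcont3)
    ((hq.continuous.mul hcont).integrable_of_hasCompactSupport hc.mul_right)
    (fun x _ => hq.differentiable one_ne_zero x) (fun x _ => (hd x).differentiableAt)
  simp_rw [hfd] at key
  rw [← neg_eq_iff_eq_neg] at key
  rw [← key, ← integral_const_mul, ← integral_neg]
  refine integral_congr_ae (Filter.Eventually.of_forall fun v => ?_)
  simp only
  ring

lemma ibp0 (k : ℕ) (q : EuclideanSpace ℝ (Fin (2*k+3)) → ℝ) (hq : ContDiff ℝ 1 q)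
    (hc : HasCompactSupport q) (e : EuclideanSpace ℝ (Fin (2*k+3))) :
    ∫ v, fderiv ℝ q v e * (‖v‖^(2*k+1))⁻¹ =
      (2*k+1) * ∫ v, q v * (inner ℝ v e * (‖v‖^(2*k+3))⁻¹) := by
  have hq1 : Continuous (fun v => fderiv ℝ q v e) :=
    (hq.continuous_fderiv one_ne_zero).clm_apply continuous_const
  have hpos : ∀ ε : ℝ, 0 < ε → ∀ v : EuclideanSpace ℝ (Fin (2*k+3)), 0 < ‖v‖^2+ε := fun ε hε v => by positivity
  have hcont : ∀ ε : ℝ, 0 < ε → ∀ m : ℕ, Continuous (fun v : EuclideanSpace ℝ (Fin (2*k+3)) => ((√(‖v‖^2+ε))^m)⁻¹) := by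
    intro ε hε m
    refine Continuous.inv₀ (by fun_prop) fun v => pow_ne_zero _ (Real.sqrt_pos.2 (hpos ε hε v)).ne'
  have hle : ∀ ε : ℝ, 0 < ε → ∀ m : ℕ, ∀ v : EuclideanSpace ℝ (Fin (2*k+3)), v ≠ 0 →
      |((√(‖v‖^2+ε))^m)⁻¹| ≤ (‖v‖^m)⁻¹ := by
    intro ε hε m v hv
    have h0 : 0 < ‖v‖ := norm_pos_iff.2 hv
    have h1 : ‖v‖ ≤ √(‖v‖^2+ε) := Real.le_sqrt_of_sq_le (by linarith)
    rw [abs_of_nonneg (by positivity)]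
    gcongr
  have hlim : ∀ m : ℕ, ∀ v : EuclideanSpace ℝ (Fin (2*k+3)), v ≠ 0 →
      Filter.Tendsto (fun ε : ℝ => ((√(‖v‖^2+ε))^m)⁻¹) (nhdsWithin 0 (Ioi 0)) (nhds (‖v‖^m)⁻¹) := by
    intro m v hv
    have h0 : 0 < ‖v‖ := norm_pos_iff.2 hv
    have : ContinuousAt (fun ε : ℝ => ((√(‖v‖^2+ε))^m)⁻¹) 0 := by
      refine ContinuousAt.inv₀ (by fun_prop) ?_
      have : 0 < √(‖v‖^2+0) := Real.sqrt_pos.2 (by positivity)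
      positivity
    have h2 := this.tendsto
    simp only [add_zero, Real.sqrt_sq h0.le] at h2
    exact h2.mono_left nhdsWithin_le_nhds
  have hae : ∀ᵐ v : EuclideanSpace ℝ (Fin (2*k+3)), v ≠ 0 := by
    simp [ae_iff]
  have hI := integrable_mul_norm_pow k
  have L1 : Filter.Tendsto (fun ε : ℝ => ∫ v, fderiv ℝ q v e * ((√(‖v‖^2+ε))^(2*k+1))⁻¹)
      (nhdsWithin 0 (Ioi 0)) (nhds (∫ v, fderiv ℝ q v e * (‖v‖^(2*k+1))⁻¹)) := by
    refine tendsto_integral_filter_of_dominated_convergence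
      (fun v => ‖fderiv ℝ q v e‖ * (‖v‖^(2*k+1))⁻¹) ?_ ?_ ?_ ?_
    · filter_upwards [self_mem_nhdsWithin] with ε hε
      exact (hq1.mul (hcont ε hε _)).aestronglyMeasurable
    · filter_upwards [self_mem_nhdsWithin] with ε hε
      filter_upwards [hae] with v hv
      rw [norm_mul]
      exact mul_le_mul_of_nonneg_left (hle ε hε _ v hv) (norm_nonneg _)
    · exact hI _ _ (by omega) hq1.norm (hc.fderiv_apply ℝ e).norm
    · filter_upwards [hae] with v hv
      exact (hlim _ v hv).const_mul _
  have L2 : Filter.Tendsto (fun ε : ℝ => ∫ v, q v * (inner ℝ v e * ((√(‖v‖^2+ε))^(2*k+3))⁻¹))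
      (nhdsWithin 0 (Ioi 0)) (nhds (∫ v, q v * (inner ℝ v e * (‖v‖^(2*k+3))⁻¹))) := by
    refine tendsto_integral_filter_of_dominated_convergence
      (fun v => (‖q v‖ * ‖e‖) * (‖v‖^(2*k+2))⁻¹) ?_ ?_ ?_ ?_
    · filter_upwards [self_mem_nhdsWithin] with ε hε
      exact (hq.continuous.mul ((continuous_id.inner continuous_const).mul (hcont ε hε _))).aestronglyMeasurable
    · filter_upwards [self_mem_nhdsWithin] with ε hε
      filter_upwards [hae] with v hv
      rw [norm_mul, norm_mul, mul_assoc]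
      refine mul_le_mul_of_nonneg_left ?_ (norm_nonneg _)
      have h0 : 0 < ‖v‖ := norm_pos_iff.2 hv
      calc _ ≤ (‖v‖ * ‖e‖) * (‖v‖^(2*k+3))⁻¹ :=
            mul_le_mul (norm_inner_le_norm _ _) (hle ε hε _ v hv) (abs_nonneg _) (by positivity)
        _ = _ := by field_simp; ring
    · exact hI _ _ le_rfl (hq.continuous.norm.mul continuous_const) (hc.norm.mul_right)
    · filter_upwards [hae] with v hv
      exact ((hlim _ v hv).const_mul _).const_mul _
  refine tendsto_nhds_unique L1 ?_
  refine (L2.const_mul (2*k+1 : ℝ)).congr' ?_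
  filter_upwards [self_mem_nhdsWithin] with ε hε
  exact (ibp_eps k q hq hc e ε hε).symm

lemma radial_integrable (k : ℕ) (p : EuclideanSpace ℝ (Fin (2*k+3)) → ℝ) (hp : Continuous p)
    (hc : HasCompactSupport p) (e : EuclideanSpace ℝ (Fin (2*k+3))) :
    Integrable (fun v => p v * (inner ℝ v e * (‖v‖^(2*k+3))⁻¹)) := by
  have h := integrable_mul_norm_pow k (2*k+2) (fun v => p v * ‖e‖) le_rfl (hp.mul continuous_const) hc.mul_right
  refine h.mono ?_ ?_
  · refine hp.aestronglyMeasurable.mul (Measurable.aestronglyMeasurable ?_)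
    have : Measurable (fun v : EuclideanSpace ℝ (Fin (2*k+3)) => inner ℝ v e) :=
      (continuous_id.inner continuous_const).measurable
    fun_prop
  · refine Filter.Eventually.of_forall fun v => ?_
    rw [norm_mul, norm_mul, norm_mul, norm_mul, mul_assoc]
    refine mul_le_mul_of_nonneg_left ?_ (norm_nonneg _)
    rcases eq_or_ne v 0 with rfl | hv
    · simp
    have h0 : 0 < ‖v‖ := norm_pos_iff.2 hv
    calc _ ≤ (‖v‖ * ‖e‖) * ‖(‖v‖^(2*k+3))⁻¹‖ := by gcongr; exact norm_inner_le_norm _ _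
      _ = _ := by
        simp only [norm_inv, norm_pow, norm_norm]
        field_simp
        ring

lemma sum_inner_single {n : ℕ} (L : EuclideanSpace ℝ (Fin n) →L[ℝ] ℝ) (v : EuclideanSpace ℝ (Fin n)) :
    ∑ i, L (EuclideanSpace.single i 1) * inner ℝ v (EuclideanSpace.single i (1:ℝ)) = L v := by
  conv_rhs => rw [← (EuclideanSpace.basisFun (Fin n) ℝ).sum_repr' v]
  simp only [map_sum, map_smul, smul_eq_mul, EuclideanSpace.basisFun_apply]
  refine Finset.sum_congr rfl fun i _ => ?_
  rw [real_inner_comm, mul_comm]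

lemma radial (k : ℕ) (p : EuclideanSpace ℝ (Fin (2*k+3)) → ℝ) (hp : ContDiff ℝ 1 p)
    (hc : HasCompactSupport p) :
    ∑ i, ∫ v, fderiv ℝ p v (EuclideanSpace.single i 1) * (inner ℝ v (EuclideanSpace.single i (1:ℝ)) * (‖v‖^(2*k+3))⁻¹)
     = - (sphereMeasure (2*k+3)).real univ * p 0 := by
  have hint : ∀ i : Fin (2*k+3), Integrable (fun v => fderiv ℝ p v (EuclideanSpace.single i 1) * (inner ℝ v (EuclideanSpace.single i (1:ℝ)) * (‖v‖^(2*k+3))⁻¹)) :=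
    fun i => radial_integrable k _ ((hp.continuous_fderiv one_ne_zero).clm_apply continuous_const)
      (hc.fderiv_apply ℝ _) _
  rw [← integral_finsetSum _ fun i _ => hint i]
  have hint2 := integrable_finsetSum Finset.univ fun i _ => hint i
  have heq : ∀ v, ∑ i, fderiv ℝ p v (EuclideanSpace.single i 1) * (inner ℝ v (EuclideanSpace.single i (1:ℝ)) * (‖v‖^(2*k+3))⁻¹)
      = fderiv ℝ p v v * (‖v‖^(2*k+3))⁻¹ := by
    intro v
    rw [← sum_inner_single (fderiv ℝ p v) v, Finset.sum_mul]
    exact Finset.sum_congr rfl fun i _ => by ring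
  simp_rw [heq] at hint2 ⊢
  rw [polar1 _ hint2]
  have h1 : ∀ θ : sphere (0 : EuclideanSpace ℝ (Fin (2*k+3))) 1,
      (∫ r in Ioi (0:ℝ), r^(Module.finrank ℝ (EuclideanSpace ℝ (Fin (2*k+3))) - 1) *
        (fderiv ℝ p (r • (θ : EuclideanSpace ℝ (Fin (2*k+3)))) (r • (θ : EuclideanSpace ℝ (Fin (2*k+3)))) * (‖r • (θ : EuclideanSpace ℝ (Fin (2*k+3)))‖^(2*k+3))⁻¹)) = - p 0 := by
    intro θ
    have hθ : ‖(θ : EuclideanSpace ℝ (Fin (2*k+3)))‖ = 1 := by simp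
    have hcd : ContDiff ℝ 1 (fun r : ℝ => p (r • (θ : EuclideanSpace ℝ (Fin (2*k+3))))) :=
      hp.comp (contDiff_id.smul contDiff_const)
    have hcs : HasCompactSupport (fun r : ℝ => p (r • (θ : EuclideanSpace ℝ (Fin (2*k+3))))) := by
      obtain ⟨R, hR⟩ := hc.isCompact.isBounded.subset_closedBall (0 : EuclideanSpace ℝ (Fin (2*k+3)))
      refine HasCompactSupport.of_support_subset_isCompact (isCompact_Icc (a := -R) (b := R)) ?_
      intro r hr
      have := hR (subset_tsupport _ hr)
      rw [mem_closedBall_zero_iff, norm_smul, hθ, mul_one] at this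
      exact abs_le.1 this
    have h2 := hcs.integral_Ioi_deriv_eq hcd 0
    rw [zero_smul] at h2
    rw [← h2]
    refine setIntegral_congr_fun measurableSet_Ioi fun r hr => ?_
    have hr : 0 < r := hr
    have h3 : HasDerivAt (fun r : ℝ => r • (θ : EuclideanSpace ℝ (Fin (2*k+3)))) (θ : EuclideanSpace ℝ (Fin (2*k+3))) r := by
      simpa using (hasDerivAt_id r).smul_const (θ : EuclideanSpace ℝ (Fin (2*k+3)))
    have h4 := ((hp.differentiable one_ne_zero _).hasFDerivAt (x := r • (θ : EuclideanSpace ℝ (Fin (2*k+3))))).comp_hasDerivAt r h3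
    have h5 : deriv (fun r : ℝ => p (r • (θ : EuclideanSpace ℝ (Fin (2*k+3))))) r = _ := h4.deriv
    rw [h5]
    simp only [finrank_euclideanSpace_fin, norm_smul, hθ, mul_one, map_smul, smul_eq_mul, Real.norm_eq_abs, abs_of_pos hr]
    rw [show 2*k+3-1 = 2*k+2 by omega]
    field_simp
    ring
  simp_rw [h1]
  rw [integral_const]
  simp [sphereMeasure]

theorem lap_newt_eq (k : ℕ) (f : EuclideanSpace ℝ (Fin (2*k+3)) → ℝ) (hf : ContDiff ℝ 2 f)
    (hc : HasCompactSupport f) (z : EuclideanSpace ℝ (Fin (2*k+3))) :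
    lap (newt k f) z = - (2*k+1) * (sphereMeasure (2*k+3)).real univ * f z := by
  rw [lap_newt k f hf hc]
  have hp : ContDiff ℝ 2 (fun v => f (z + v)) := hf.comp (contDiff_const.add contDiff_id)
  have hpc : HasCompactSupport (fun v => f (z + v)) := hc.comp_homeomorph (Homeomorph.addLeft z)
  have h1 := radial k (fun v => f (z + v)) (hp.of_le (by norm_num)) hpc
  simp only [add_zero] at h1
  have h2 : - (2*k+1) * (sphereMeasure (2*k+3)).real univ * f z =
    (2*k+1) * (- (sphereMeasure (2*k+3)).real univ * f z) := by ring
  rw [h2, ← h1, Finset.mul_sum]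
  refine Finset.sum_congr rfl fun i _ => ?_
  rw [← ibp0 k _ ((hp.fderiv_right (m := 1) (by norm_num)).clm_apply contDiff_const) (hpc.fderiv_apply ℝ _)]
  unfold newt
  refine integral_congr_ae (Filter.Eventually.of_forall fun v => ?_)
  simp only
  simp_rw [fderiv_comp_add_left]
  rw [fderiv_comp_add_left (f := fun y => fderiv ℝ f y (EuclideanSpace.single i 1)) ]


instance sphereMeasure_finite (n : ℕ) : IsFiniteMeasure (sphereMeasure n) := by
  unfold sphereMeasure; infer_instance

lemma contDiff_sphere_param {n : ℕ} {P : Type*} [NormedAddCommGroup P] [NormedSpace ℝ P]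
    (Q : P → EuclideanSpace ℝ (Fin n) → ℝ) (hQ : ContDiff ℝ (⊤ : ℕ∞) (fun p : P × EuclideanSpace ℝ (Fin n) => Q p.1 p.2)) :
    ContDiff ℝ (⊤ : ℕ∞) (fun p => ∫ σ : sphere (0 : EuclideanSpace ℝ (Fin n)) 1, Q p σ ∂(sphereMeasure n)) := by
  let χ : ContDiffBump (0 : EuclideanSpace ℝ (Fin n)) := ⟨2, 3, by norm_num, by norm_num⟩
  let μ := (sphereMeasure n).map Subtype.val
  have : IsFiniteMeasure μ := Measure.isFiniteMeasure_map _ _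
  have hloc : LocallyIntegrable (fun _ : EuclideanSpace ℝ (Fin n) => (1:ℝ)) μ :=
    (integrable_const _).locallyIntegrable
  have h := contDiffOn_convolution_right_with_param_comp (𝕜 := ℝ) (μ := μ) (n := ⊤) (ContinuousLinearMap.mul ℝ ℝ)
    (s := (univ : Set P)) (v := fun _ => (0 : EuclideanSpace ℝ (Fin n))) contDiffOn_const
    (f := fun _ => (1:ℝ)) (g := fun p w => χ w * Q p (-w)) (k := closedBall 0 3) isOpen_univ
    (isCompact_closedBall _ _) (by
      intro p w _ hw
      have : χ w = 0 := χ.zero_of_le_dist (by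
        have h3 : ¬ dist w 0 ≤ 3 := hw
        exact (not_le.1 h3).le)
      simp [this]) hloc (by
      refine ContDiff.contDiffOn ?_
      refine ContDiff.mul (χ.contDiff.comp contDiff_snd) ?_
      exact hQ.comp (contDiff_fst.prodMk contDiff_snd.neg))
  rw [contDiffOn_univ] at h
  convert h using 1
  ext p
  rw [convolution_def, integral_map_of_stronglyMeasurable]
  · refine integral_congr_ae (Filter.Eventually.of_forall fun σ => ?_)
    have : χ (-(σ : EuclideanSpace ℝ (Fin n))) = 1 := χ.one_of_mem_closedBall (by simp [χ])
    simp [this]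
  · exact measurable_subtype_coe
  · have : Continuous (fun w => Q p (- (0 - w))) := hQ.continuous.comp (f := fun w => (p, -(0-w))) (by fun_prop)
    have h2 : Continuous (fun w : EuclideanSpace ℝ (Fin n) => χ (0 - w)) := χ.continuous.comp (by fun_prop)
    exact (continuous_const.mul (h2.mul this)).stronglyMeasurable

/-- derivative in the second variable -/
noncomputable def DTau {E : Type*} (Ψ : E × ℝ → ℝ) : E × ℝ → ℝ := fun p => deriv (fun s => Ψ (p.1, s)) p.2

lemma isOpen_snd_pos {E : Type*} [TopologicalSpace E] : IsOpen {p : E × ℝ | 0 < p.2} :=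
  isOpen_lt continuous_const continuous_snd

lemma DTau_hasDerivAt {E : Type*} [NormedAddCommGroup E] [NormedSpace ℝ E] (Ψ : E × ℝ → ℝ)
    (h : ContDiffOn ℝ (⊤ : ℕ∞) Ψ {p | 0 < p.2}) (p : E × ℝ) (hp : 0 < p.2) :
    HasDerivAt (fun s => Ψ (p.1, s)) (fderiv ℝ Ψ p (0, 1)) p.2 := by
  have h1 : DifferentiableAt ℝ Ψ p := (h.differentiableOn (by simp)).differentiableAt (isOpen_snd_pos.mem_nhds hp)
  have h2 : HasDerivAt (fun s : ℝ => (p.1, s)) ((0 : E), (1:ℝ)) p.2 :=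
    (hasDerivAt_const _ _).prodMk (hasDerivAt_id _)
  exact HasFDerivAt.comp_hasDerivAt (l := Ψ) (f := fun s : ℝ => (p.1, s)) p.2 h1.hasFDerivAt h2

lemma DTau_contDiffOn {E : Type*} [NormedAddCommGroup E] [NormedSpace ℝ E] (Ψ : E × ℝ → ℝ)
    (h : ContDiffOn ℝ (⊤ : ℕ∞) Ψ {p | 0 < p.2}) : ContDiffOn ℝ (⊤ : ℕ∞) (DTau Ψ) {p | 0 < p.2} := by
  have h1 : ContDiffOn ℝ (⊤ : ℕ∞) (fun p => fderiv ℝ Ψ p (0, 1)) {p | 0 < p.2} :=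
    (h.fderiv_of_isOpen isOpen_snd_pos (by simp)).clm_apply contDiffOn_const
  exact h1.congr fun p hp => (DTau_hasDerivAt Ψ h p hp).deriv

lemma DTau_iter_contDiffOn {E : Type*} [NormedAddCommGroup E] [NormedSpace ℝ E] (Ψ : E × ℝ → ℝ)
    (h : ContDiffOn ℝ (⊤ : ℕ∞) Ψ {p | 0 < p.2}) (j : ℕ) : ContDiffOn ℝ (⊤ : ℕ∞) (DTau^[j] Ψ) {p | 0 < p.2} := by
  induction j with
  | zero => exact h
  | succ j ih => rw [Function.iterate_succ_apply']; exact DTau_contDiffOn _ ih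

lemma DTau_hasDerivAt' {E : Type*} [NormedAddCommGroup E] [NormedSpace ℝ E] (Ψ : E × ℝ → ℝ)
    (h : ContDiffOn ℝ (⊤ : ℕ∞) Ψ {p | 0 < p.2}) (x : E) (t : ℝ) (hp : 0 < t) :
    HasDerivAt (fun s => Ψ (x, s)) (DTau Ψ (x, t)) t := by
  have := DTau_hasDerivAt Ψ h (x, t) hp
  exact this.differentiableAt.hasDerivAt

lemma Dop_iter {E : Type*} [NormedAddCommGroup E] [NormedSpace ℝ E] (Ψ : E × ℝ → ℝ)
    (h : ContDiffOn ℝ (⊤ : ℕ∞) Ψ {p | 0 < p.2}) (x : E) (g : ℝ → ℝ) (hg : ∀ t, 0 < t → g t = Ψ (x, t^2)) (j : ℕ) :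
    ∀ t, 0 < t → Dop^[j] g t = DTau^[j] Ψ (x, t^2) := by
  induction j with
  | zero => exact hg
  | succ j ih =>
    intro t ht
    rw [Function.iterate_succ_apply', Function.iterate_succ_apply']
    have h1 : Dop^[j] g =ᶠ[nhds t] (fun t => DTau^[j] Ψ (x, t^2)) := by
      filter_upwards [lt_mem_nhds ht] with s hs using ih s hs
    have h2 := DTau_hasDerivAt' _ (DTau_iter_contDiffOn Ψ h j) x (t^2) (by positivity)
    have h3 : HasDerivAt (fun t : ℝ => DTau^[j] Ψ (x, t^2)) _ t := HasDerivAt.comp (h₂ := fun s => DTau^[j] Ψ (x, s)) t h2 (hasDerivAt_pow 2 t)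
    rw [Dop, h1.deriv_eq, h3.deriv]
    field_simp
    simp
    ring

lemma G_hasDerivAt {n : ℕ} (Ψ : EuclideanSpace ℝ (Fin n) × ℝ → ℝ)
    (h : ContDiffOn ℝ (⊤ : ℕ∞) Ψ {p | 0 < p.2}) (b : sphere (0 : EuclideanSpace ℝ (Fin n)) 1 → ℝ) (hb : Continuous b)
    (δ : ℝ) (hδ : ∀ θ, δ ≤ b θ) (u : ℝ) (hu : -δ < u) :
    HasDerivAt (fun u => ∫ θ : sphere (0 : EuclideanSpace ℝ (Fin n)) 1, Ψ (θ, b θ + u) ∂(sphereMeasure n))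
      (∫ θ : sphere (0 : EuclideanSpace ℝ (Fin n)) 1, DTau Ψ (θ, b θ + u) ∂(sphereMeasure n)) u := by
  obtain ⟨r, hr, hru⟩ : ∃ r, 0 < r ∧ -δ < u - r := ⟨(u+δ)/2, by linarith, by linarith⟩
  have hcT := (DTau_contDiffOn Ψ h).continuousOn
  have hpos : ∀ θ, ∀ s, u - r ≤ s → 0 < b θ + s := fun θ s hs => by linarith [hδ θ]
  have hcomp : ∀ Φ : EuclideanSpace ℝ (Fin n) × ℝ → ℝ, ContinuousOn Φ {p | 0 < p.2} → ∀ s, u - r ≤ s →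
      Continuous (fun θ : sphere (0 : EuclideanSpace ℝ (Fin n)) 1 => Φ (θ, b θ + s)) := by
    intro Φ hΦ s hs
    exact hΦ.comp_continuous (by fun_prop) (fun θ => hpos θ s hs)
  obtain ⟨C, hC⟩ : ∃ C, ∀ θ : sphere (0 : EuclideanSpace ℝ (Fin n)) 1, ∀ s ∈ Icc (u-r) (u+r), ‖DTau Ψ (θ, b θ + s)‖ ≤ C := by
    have hK : IsCompact ((univ : Set (sphere (0 : EuclideanSpace ℝ (Fin n)) 1)) ×ˢ Icc (u-r) (u+r)) :=
      isCompact_univ.prod isCompact_Icc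
    have hco : ContinuousOn (fun q : sphere (0 : EuclideanSpace ℝ (Fin n)) 1 × ℝ => DTau Ψ ((q.1 : EuclideanSpace ℝ (Fin n)), b q.1 + q.2))
        ((univ : Set (sphere (0 : EuclideanSpace ℝ (Fin n)) 1)) ×ˢ Icc (u-r) (u+r)) := by
      refine hcT.comp (by fun_prop) ?_
      intro q hq
      exact hpos _ _ hq.2.1
    obtain ⟨C, hC⟩ := hK.exists_bound_of_continuousOn hco
    exact ⟨C, fun θ s hs => hC (θ, s) ⟨mem_univ _, hs⟩⟩
  refine (hasDerivAt_integral_of_dominated_loc_of_deriv_le (bound := fun _ => C) (s := Ioo (u-r) (u+r))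
    (F' := fun s (θ : sphere (0 : EuclideanSpace ℝ (Fin n)) 1) => DTau Ψ (θ, b θ + s)) (Ioo_mem_nhds (by linarith) (by linarith)) ?_ ?_ ?_ ?_ (integrable_const _) ?_).2
  · filter_upwards [Ioo_mem_nhds (show u-r < u by linarith) (show u < u+r by linarith)] with s hs
    exact (hcomp Ψ h.continuousOn s hs.1.le).aestronglyMeasurable
  · exact (hcomp Ψ h.continuousOn u (by linarith)).integrable_of_hasCompactSupport (HasCompactSupport.of_compactSpace _)
  · exact (hcomp _ hcT u (by linarith)).aestronglyMeasurable
  · exact Filter.Eventually.of_forall fun θ s hs => hC θ s ⟨hs.1.le, hs.2.le⟩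
  · refine Filter.Eventually.of_forall fun θ s hs => ?_
    have h1 := DTau_hasDerivAt' Ψ h θ (b θ + s) (hpos θ s hs.1.le)
    simpa using HasDerivAt.comp_const_add (b θ) s h1


lemma G_contDiffOn {n : ℕ} (b : sphere (0 : EuclideanSpace ℝ (Fin n)) 1 → ℝ) (hb : Continuous b)
    (δ : ℝ) (hδ : ∀ θ, δ ≤ b θ) (m : ℕ) : ∀ (Ψ : EuclideanSpace ℝ (Fin n) × ℝ → ℝ)
    (_ : ContDiffOn ℝ (⊤ : ℕ∞) Ψ {p | 0 < p.2}),
    ContDiffOn ℝ m (fun u => ∫ θ : sphere (0 : EuclideanSpace ℝ (Fin n)) 1, Ψ (θ, b θ + u) ∂(sphereMeasure n)) (Ioi (-δ)) := by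
  induction m with
  | zero =>
    intro Ψ h
    simp only [CharP.cast_eq_zero, contDiffOn_zero]
    exact fun u hu => (G_hasDerivAt Ψ h b hb δ hδ u hu).continuousAt.continuousWithinAt
  | succ m ih =>
    intro Ψ h
    push_cast
    rw [contDiffOn_succ_iff_deriv_of_isOpen isOpen_Ioi]
    refine ⟨fun u hu => (G_hasDerivAt Ψ h b hb δ hδ u hu).differentiableAt.differentiableWithinAt, by simp, ?_⟩
    exact (ih _ (DTau_contDiffOn Ψ h)).congr fun u hu => (G_hasDerivAt Ψ h b hb δ hδ u hu).deriv

lemma G_iteratedDeriv {n : ℕ} (b : sphere (0 : EuclideanSpace ℝ (Fin n)) 1 → ℝ) (hb : Continuous b)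
    (δ : ℝ) (hδ : ∀ θ, δ ≤ b θ) (Ψ : EuclideanSpace ℝ (Fin n) × ℝ → ℝ)
    (h : ContDiffOn ℝ (⊤ : ℕ∞) Ψ {p | 0 < p.2}) (j : ℕ) : ∀ u, -δ < u →
    iteratedDeriv j (fun u => ∫ θ : sphere (0 : EuclideanSpace ℝ (Fin n)) 1, Ψ (θ, b θ + u) ∂(sphereMeasure n)) u =
    ∫ θ : sphere (0 : EuclideanSpace ℝ (Fin n)) 1, (DTau^[j] Ψ) (θ, b θ + u) ∂(sphereMeasure n) := by
  induction j with
  | zero => intro u _; simp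
  | succ j ih =>
    intro u hu
    rw [iteratedDeriv_succ, Function.iterate_succ_apply']
    rw [← (G_hasDerivAt _ (DTau_iter_contDiffOn Ψ h j) b hb δ hδ u hu).deriv]
    apply Filter.EventuallyEq.deriv_eq
    filter_upwards [lt_mem_nhds hu] with s hs using ih s hs

lemma G_taylor {n : ℕ} (b : sphere (0 : EuclideanSpace ℝ (Fin n)) 1 → ℝ) (hb : Continuous b)
    (δ : ℝ) (hδ0 : 0 < δ) (hδ : ∀ θ, δ ≤ b θ) (Ψ : EuclideanSpace ℝ (Fin n) × ℝ → ℝ)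
    (h : ContDiffOn ℝ (⊤ : ℕ∞) Ψ {p | 0 < p.2}) (N : ℕ) : ∃ (C : ℝ) (a : ℕ → ℝ),
    a N = (∫ θ : sphere (0 : EuclideanSpace ℝ (Fin n)) 1, (DTau^[N] Ψ) (θ, b θ) ∂(sphereMeasure n)) ∧
    ∀ u ∈ Icc (0:ℝ) 1, |(∫ θ : sphere (0 : EuclideanSpace ℝ (Fin n)) 1, Ψ (θ, b θ + u) ∂(sphereMeasure n))
      - ∑ j ∈ Finset.range (N+1), ((j.factorial : ℝ)⁻¹ * u^j) * a j| ≤ C * u^(N+1) := by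
  have hsub : Icc (0:ℝ) 1 ⊆ Ioi (-δ) := fun u hu => by
    have := hu.1
    simp only [mem_Ioi]; linarith
  have hcd := fun m => G_contDiffOn b hb δ hδ m Ψ h
  obtain ⟨C, hC⟩ := exists_taylor_mean_remainder_bound (n := N) (zero_le_one (α := ℝ)) ((hcd (N+1)).mono hsub)
  refine ⟨C, fun j => iteratedDerivWithin j (fun u => ∫ θ : sphere (0 : EuclideanSpace ℝ (Fin n)) 1, Ψ (θ, b θ + u) ∂(sphereMeasure n)) (Icc (0:ℝ) 1) 0, ?_, fun u hu => ?_⟩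
  rotate_left
  · have := hC u hu
    rw [taylor_within_apply] at this
    simpa using this
  · have h0 : (0:ℝ) ∈ Ioi (-δ) := by simpa using hδ0
    beta_reduce
    rw [iteratedDerivWithin_eq_iteratedDeriv (uniqueDiffOn_Icc zero_lt_one) ((hcd N).contDiffAt (isOpen_Ioi.mem_nhds h0)) (by simp)]
    rw [G_iteratedDeriv b hb δ hδ Ψ h N 0 h0]
    simp

lemma findiff_pow (N j : ℕ) (hj : j ≤ N) (h : ℝ) :
    ∑ i ∈ Finset.range (N+1), ((-1:ℝ)^(N-i) * (N.choose i)) * (i * h)^j = if j = N then N.factorial * h^N else 0 := by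
  have h1 := fwdDiff_iter_eq_sum_shift (1:ℝ) (fun x : ℝ => x^j) N 0
  have h2 : ∑ i ∈ Finset.range (N+1), ((-1:ℝ)^(N-i) * (N.choose i)) * (i * h)^j =
    h^j * ∑ i ∈ Finset.range (N+1), ((-1:ℝ)^(N-i) * (N.choose i)) * (i:ℝ)^j := by
    rw [Finset.mul_sum]
    refine Finset.sum_congr rfl fun i _ => ?_
    rw [mul_pow]; ring
  have h3 : ∑ i ∈ Finset.range (N+1), ((-1:ℝ)^(N-i) * (N.choose i)) * (i:ℝ)^j =
      (fwdDiff (1:ℝ))^[N] (fun x : ℝ => x^j) 0 := by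
    rw [h1]
    refine Finset.sum_congr rfl fun i _ => ?_
    simp
  rw [h2, h3]
  split_ifs with hjN
  · subst hjN
    rw [fwdDiff_iter_eq_factorial]
    simp [mul_comm]
  · rw [fwdDiff_iter_pow_eq_zero_of_lt (lt_of_le_of_ne hj hjN)]
    simp

lemma findiff_poly (N : ℕ) (p : Polynomial ℝ) (hp : p.natDegree ≤ N) (h : ℝ) :
    ∑ i ∈ Finset.range (N+1), ((-1:ℝ)^(N-i) * (N.choose i)) * p.eval (i * h) = N.factorial * h^N * p.coeff N := by
  simp_rw [Polynomial.eval_eq_sum_range' (Nat.lt_succ_of_le hp), Finset.mul_sum]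
  rw [Finset.sum_comm]
  have : ∀ j ∈ Finset.range (N+1), ∑ i ∈ Finset.range (N+1), ((-1:ℝ)^(N-i) * (N.choose i)) * (p.coeff j * (i*h)^j)
      = if j = N then N.factorial * h^N * p.coeff N else 0 := by
    intro j hj
    have h1 := findiff_pow N j (by simpa [Nat.lt_succ_iff] using hj) h
    calc _ = p.coeff j * ∑ i ∈ Finset.range (N+1), ((-1:ℝ)^(N-i) * (N.choose i)) * (i*h)^j := by
          rw [Finset.mul_sum]; exact Finset.sum_congr rfl fun i _ => by ring
      _ = _ := by
          rw [h1]
          split_ifs with hjN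
          · subst hjN; ring
          · simp
  rw [Finset.sum_congr rfl this]
  simp

lemma findiff_kernel (k : ℕ) (a r h : ℝ) :
    ∑ i ∈ Finset.range (2*k+1), ((-1:ℝ)^(2*k-i) * ((2*k).choose i)) * (1 - ((a - i*h)/(2*r))^2)^k
      = (2*k).factorial * h^(2*k) * ((-1/4)^k * (r^(2*k))⁻¹) := by
  let c : ℝ := (2*r)⁻¹
  let q : Polynomial ℝ := 1 - (Polynomial.C (a*c) - Polynomial.C c * Polynomial.X)^2
  have hl : (Polynomial.C (a*c) - Polynomial.C c * Polynomial.X : Polynomial ℝ).natDegree ≤ 1 := by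
    compute_degree
  have hq : q.natDegree ≤ 2 := by
    simp only [q]
    compute_degree
  have hq2 : q.coeff 2 = - c^2 := by
    simp only [q]
    rw [Polynomial.coeff_sub, show (2:ℕ) = 2 * 1 by norm_num]
    rw [show ((Polynomial.C (a*c) - Polynomial.C c * Polynomial.X)^(2*1) : Polynomial ℝ) = (Polynomial.C (a*c) - Polynomial.C c * Polynomial.X)^2 by norm_num]
    rw [Polynomial.coeff_pow_of_natDegree_le hl]
    simp [Polynomial.coeff_one, Polynomial.coeff_C]
  have hk : (q^k).coeff (2*k) = (-c^2)^k := by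
    rw [mul_comm 2 k, Polynomial.coeff_pow_of_natDegree_le hq, hq2]
  have hd : (q^k).natDegree ≤ 2*k := by
    refine (Polynomial.natDegree_pow_le).trans ?_
    rw [mul_comm]; exact Nat.mul_le_mul_right k hq
  have := findiff_poly (2*k) (q^k) hd h
  rw [hk] at this
  convert this using 2 with i hi
  · simp only [q, Polynomial.eval_pow, Polynomial.eval_sub, Polynomial.eval_one, Polynomial.eval_C, Polynomial.eval_mul, Polynomial.eval_X, c]
    congr 3
    ring
  · simp only [c]
    rw [pow_mul, ← inv_pow, ← mul_pow]
    congr 1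
    rw [inv_pow, mul_pow, mul_inv]
    ring

lemma top_coeff (N : ℕ) (G P : ℝ → ℝ) (a : ℕ → ℝ) (c C C' ε : ℝ) (hε : 0 < ε)
    (hG : ∀ u ∈ Icc (0:ℝ) 1, |G u - ∑ j ∈ Finset.range (N+1), ((j.factorial : ℝ)⁻¹ * u^j) * a j| ≤ C * u^(N+1))
    (hP : ∀ h, ∑ i ∈ Finset.range (N+1), ((-1:ℝ)^(N-i) * (N.choose i)) * P (i * h) = N.factorial * h^N * c)
    (hGP : ∀ u ∈ Icc (0:ℝ) ε, |G u - P u| ≤ C' * u^(N+1)) : a N = N.factorial * c := by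
  let T : ℝ → ℝ := fun u => ∑ j ∈ Finset.range (N+1), ((j.factorial : ℝ)⁻¹ * u^j) * a j
  let p : Polynomial ℝ := ∑ j ∈ Finset.range (N+1), Polynomial.C ((j.factorial : ℝ)⁻¹ * a j) * Polynomial.X^j
  have hpT : ∀ u, p.eval u = T u := by
    intro u
    simp only [p, T, Polynomial.eval_finsetSum, Polynomial.eval_mul, Polynomial.eval_C, Polynomial.eval_pow, Polynomial.eval_X]
    exact Finset.sum_congr rfl fun j _ => by ring
  have hpd : p.natDegree ≤ N := by
    refine Polynomial.natDegree_sum_le_of_forall_le _ _ fun j hj => ?_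
    refine (Polynomial.natDegree_C_mul_X_pow_le _ _).trans ?_
    simpa [Nat.lt_succ_iff] using hj
  have hpc : p.coeff N = (N.factorial : ℝ)⁻¹ * a N := by
    simp only [p, Polynomial.finsetSum_coeff, Polynomial.coeff_C_mul, Polynomial.coeff_X_pow]
    simp
  have hT : ∀ h, ∑ i ∈ Finset.range (N+1), ((-1:ℝ)^(N-i) * (N.choose i)) * T (i * h) = h^N * a N := by
    intro h
    have := findiff_poly N p hpd h
    rw [hpc] at this
    simp_rw [hpT] at this
    rw [this]
    have : (N.factorial : ℝ) ≠ 0 := by positivity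
    field_simp
  let K : ℝ := ∑ i ∈ Finset.range (N+1), (N.choose i : ℝ) * ((C + C') * (i:ℝ)^(N+1))
  have hbound : ∀ h : ℝ, 0 < h → N * h ≤ 1 → N * h ≤ ε → |a N - N.factorial * c| ≤ K * h := by
    intro h hh h1 h2
    have e1 : h^N * (a N - N.factorial * c) = ∑ i ∈ Finset.range (N+1), ((-1:ℝ)^(N-i) * (N.choose i)) * (T (i*h) - P (i*h)) := by
      simp_rw [mul_sub (_ * _)]
      rw [Finset.sum_sub_distrib, hT, hP]
      ring
    have e2 : h^N * |a N - N.factorial * c| ≤ h^N * (K * h) := by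
      rw [← abs_of_pos (pow_pos hh N), ← abs_mul, e1, abs_of_pos (pow_pos hh N)]
      refine (Finset.abs_sum_le_sum_abs _ _).trans ?_
      have e3 : h^N * (K * h) = ∑ i ∈ Finset.range (N+1), (N.choose i : ℝ) * ((C + C') * (i*h)^(N+1)) := by
        simp only [K, Finset.sum_mul, Finset.mul_sum]
        exact Finset.sum_congr rfl fun i _ => by rw [mul_pow]; ring
      rw [e3]
      refine Finset.sum_le_sum fun i hi => ?_
      have hi' : (i:ℝ) ≤ N := by
        have : i ≤ N := by simpa [Nat.lt_succ_iff] using hi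
        exact_mod_cast this
      have hi0 : 0 ≤ (i:ℝ) * h := by positivity
      have hiN : (i:ℝ) * h ≤ N * h := by gcongr
      rw [abs_mul, abs_mul, abs_pow, abs_neg, abs_one, one_pow, one_mul, Nat.abs_cast]
      refine mul_le_mul_of_nonneg_left ?_ (by positivity)
      have g1 := hG (i*h) ⟨hi0, hiN.trans h1⟩
      have g2 := hGP (i*h) ⟨hi0, hiN.trans h2⟩
      calc |T (i*h) - P (i*h)| = |(G (i*h) - P (i*h)) - (G (i*h) - T (i*h))| := by congr 1; ring
        _ ≤ |G (i*h) - P (i*h)| + |G (i*h) - T (i*h)| := abs_sub _ _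
        _ ≤ _ := by rw [add_mul]; linarith
    exact le_of_mul_le_mul_left e2 (pow_pos hh N)
  have hlim : Filter.Tendsto (fun h : ℝ => K * h) (nhdsWithin 0 (Ioi 0)) (nhds 0) := by
    have : Filter.Tendsto (fun h : ℝ => K * h) (nhds 0) (nhds (K * 0)) := (continuous_const.mul continuous_id).tendsto 0
    rw [mul_zero] at this
    exact this.mono_left nhdsWithin_le_nhds
  have hle : |a N - N.factorial * c| ≤ 0 := by
    refine ge_of_tendsto hlim ?_
    have hc1 : ∀ᶠ h : ℝ in nhds 0, N * h < min 1 ε := by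
      have : Filter.Tendsto (fun h : ℝ => (N:ℝ) * h) (nhds 0) (nhds (N * 0)) := (continuous_const.mul continuous_id).tendsto 0
      rw [mul_zero] at this
      exact this.eventually_lt_const (lt_min one_pos hε)
    filter_upwards [self_mem_nhdsWithin, nhdsWithin_le_nhds hc1] with h hh h1
    exact hbound h hh (h1.le.trans (min_le_left _ _)) (h1.le.trans (min_le_right _ _))
  have := abs_nonpos_iff.1 hle
  linarith


/-- weight -/
noncomputable def wgt (k : ℕ) (s : ℝ) : ℝ := (Icc (-1:ℝ) 1).indicator (fun s => (1 - s^2)^k) s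

lemma wgt_measurable (k : ℕ) : Measurable (wgt k) := by
  unfold wgt
  exact Measurable.indicator (by fun_prop) measurableSet_Icc

lemma wgt_le (k : ℕ) (s : ℝ) : |wgt k s| ≤ 1 := by
  unfold wgt
  by_cases hs : s ∈ Icc (-1:ℝ) 1
  · rw [indicator_of_mem hs, abs_pow]
    refine pow_le_one₀ (abs_nonneg _) ?_
    have := hs.1; have := hs.2
    rw [abs_le]; constructor <;> nlinarith
  · rw [indicator_of_notMem hs]; simp

lemma slice_u (k : ℕ) (ψ : ℝ → ℝ) (hψ : Continuous ψ) (a : ℝ) (v : EuclideanSpace ℝ (Fin (2*k+3))) (hv : v ≠ 0) :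
    ∫ θ : sphere (0 : EuclideanSpace ℝ (Fin (2*k+3))) 1, ψ (a - 2 * inner ℝ (θ : EuclideanSpace ℝ (Fin (2*k+3))) v) ∂(sphereMeasure (2*k+3))
      = (2*Real.pi^(k+1)/k.factorial) * ((2*‖v‖)⁻¹ * ∫ u, ψ u * wgt k ((a - u)/(2*‖v‖))) := by
  have hr : 0 < ‖v‖ := norm_pos_iff.2 hv
  have h1 := slice k (fun s => ψ (a - 2*‖v‖*s)) (by fun_prop) (‖v‖⁻¹ • v) (by
    rw [norm_smul, norm_inv, norm_norm, inv_mul_cancel₀ hr.ne'])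
  have h2 : ∀ θ : sphere (0 : EuclideanSpace ℝ (Fin (2*k+3))) 1,
      a - 2*‖v‖* inner ℝ (θ : EuclideanSpace ℝ (Fin (2*k+3))) (‖v‖⁻¹ • v) = a - 2 * inner ℝ (θ : EuclideanSpace ℝ (Fin (2*k+3))) v := by
    intro θ
    rw [inner_smul_right]
    field_simp
  simp only [h2] at h1
  rw [h1]
  congr 1
  have h3 := Measure.integral_comp_mul_left (fun x => ψ (a - x) * wgt k ((a - (a - x))/(2*‖v‖))) (2*‖v‖)
  rw [integral_sub_left_eq_self (fun u => ψ u * wgt k ((a - u)/(2*‖v‖))) volume a, abs_of_pos (by positivity), smul_eq_mul] at h3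
  rw [← h3, intervalIntegral.integral_of_le (by norm_num), ← integral_Icc_eq_integral_Ioc, ← integral_indicator measurableSet_Icc]
  refine integral_congr_ae (Filter.Eventually.of_forall fun s => ?_)
  have h4 : (a - (a - 2*‖v‖*s))/(2*‖v‖) = s := by field_simp; ring
  simp only [h4, wgt]
  by_cases hs : s ∈ Icc (-1:ℝ) 1
  · rw [indicator_of_mem hs, indicator_of_mem hs]
  · rw [indicator_of_notMem hs, indicator_of_notMem hs, mul_zero]

/-- the function Ψ -/
noncomputable def Psi (k : ℕ) (c : ℝ) (f : EuclideanSpace ℝ (Fin (2*k+3)) → ℝ) : EuclideanSpace ℝ (Fin (2*k+3)) × ℝ → ℝ :=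
  fun p => (√p.2)^(2*k+1) * (c * ∫ s : sphere (0 : EuclideanSpace ℝ (Fin (2*k+3))) 1, f (p.1 - √p.2 • (s : EuclideanSpace ℝ (Fin (2*k+3)))) ∂(sphereMeasure (2*k+3)))

lemma smean_contDiff (k : ℕ) (f : EuclideanSpace ℝ (Fin (2*k+3)) → ℝ) (hf : ContDiff ℝ (⊤ : ℕ∞) f) :
    ContDiff ℝ (⊤ : ℕ∞) (fun p : EuclideanSpace ℝ (Fin (2*k+3)) × ℝ => ∫ s : sphere (0 : EuclideanSpace ℝ (Fin (2*k+3))) 1, f (p.1 - p.2 • (s : EuclideanSpace ℝ (Fin (2*k+3)))) ∂(sphereMeasure (2*k+3))) := by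
  refine contDiff_sphere_param (P := EuclideanSpace ℝ (Fin (2*k+3)) × ℝ) (fun p σ => f (p.1 - p.2 • σ)) ?_
  exact hf.comp (by fun_prop)

lemma Psi_contDiffOn (k : ℕ) (c : ℝ) (f : EuclideanSpace ℝ (Fin (2*k+3)) → ℝ) (hf : ContDiff ℝ (⊤ : ℕ∞) f) :
    ContDiffOn ℝ (⊤ : ℕ∞) (Psi k c f) {p | 0 < p.2} := by
  have h1 : ContDiffOn ℝ (⊤ : ℕ∞) (fun p : EuclideanSpace ℝ (Fin (2*k+3)) × ℝ => √p.2) {p | 0 < p.2} :=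
    contDiffOn_snd.sqrt fun p hp => (ne_of_gt hp)
  unfold Psi
  refine (h1.pow _).mul (contDiffOn_const.mul ?_)
  exact (smean_contDiff k f hf).comp_contDiffOn (contDiffOn_fst.prodMk h1)

lemma Psi_continuous (k : ℕ) (c : ℝ) (f : EuclideanSpace ℝ (Fin (2*k+3)) → ℝ) (hf : ContDiff ℝ (⊤ : ℕ∞) f) :
    Continuous (Psi k c f) := by
  unfold Psi
  have h1 : Continuous (fun p : EuclideanSpace ℝ (Fin (2*k+3)) × ℝ => √p.2) := by fun_prop
  refine (h1.pow _).mul (continuous_const.mul ?_)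
  exact (smean_contDiff k f hf).continuous.comp (continuous_fst.prodMk h1)

lemma Psi_test (k : ℕ) (c : ℝ) (f : EuclideanSpace ℝ (Fin (2*k+3)) → ℝ) (hf : ContDiff ℝ (⊤ : ℕ∞) f) (hc : HasCompactSupport f)
    (z θ : EuclideanSpace ℝ (Fin (2*k+3))) (ψ : ℝ → ℝ) (hψ : Continuous ψ) :
    ∫ u, Psi k c f (θ, ‖z-θ‖^2 + u) * ψ u = 2 * c * ∫ v, f (z + v) * ψ (‖v‖^2 + 2 * inner ℝ z v - 2 * inner ℝ θ v) := by
  set b := ‖z-θ‖^2 with hb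
  have e1 : ∫ u, Psi k c f (θ, b + u) * ψ u = ∫ τ, Psi k c f (θ, τ) * ψ (τ - b) := by
    rw [← integral_add_left_eq_self (fun τ => Psi k c f (θ, τ) * ψ (τ - b)) b]
    simp
  have e2 : ∫ τ, Psi k c f (θ, τ) * ψ (τ - b) = ∫ τ in Ioi (0:ℝ), Psi k c f (θ, τ) * ψ (τ - b) := by
    symm
    refine setIntegral_eq_integral_of_forall_compl_eq_zero fun τ hτ => ?_
    have : √τ = 0 := Real.sqrt_eq_zero_of_nonpos (by simpa using hτ)
    simp [Psi, this]
  have e3 := integral_comp_rpow_Ioi_of_pos (g := fun τ => Psi k c f (θ, τ) * ψ (τ - b)) (p := 2) (by norm_num)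
  have hcs : HasCompactSupport (fun y => f (θ - y) * ψ (‖y‖^2 - b)) := by
    have : HasCompactSupport (fun y => f (θ - y)) := hc.comp_homeomorph (Homeomorph.subLeft θ)
    exact this.mul_right
  have hcon : Continuous (fun y => f (θ - y) * ψ (‖y‖^2 - b)) :=
    (hf.continuous.comp (by fun_prop)).mul (hψ.comp (by fun_prop))
  have e4 := polar2 volume (hcon.integrable_of_hasCompactSupport hcs)
  have e5 : ∫ y, f (θ - y) * ψ (‖y‖^2 - b) = ∫ v, f (z + v) * ψ (‖v‖^2 + 2 * inner ℝ z v - 2 * inner ℝ θ v) := by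
    rw [← integral_sub_left_eq_self _ volume (θ - z)]
    refine integral_congr_ae (Filter.Eventually.of_forall fun v => ?_)
    have a1 : θ - (θ - z - v) = z + v := by abel
    have a2 : ‖θ - z - v‖^2 - b = ‖v‖^2 + 2 * inner ℝ z v - 2 * inner ℝ θ v := by
      rw [hb, ← norm_neg (z - θ), neg_sub, norm_sub_sq_real (θ - z) v, inner_sub_left]
      ring
    simp only [a1, a2]
  rw [e1, e2, ← e3, ← e5, e4, ← integral_const_mul]
  refine setIntegral_congr_fun measurableSet_Ioi fun t ht => ?_
  have ht : 0 < t := ht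
  simp only [finrank_euclideanSpace_fin, Psi]
  rw [show (2:ℝ) - 1 = 1 by norm_num, Real.rpow_one, Real.rpow_two, Real.sqrt_sq ht.le]
  have a3 : ∀ s : sphere (0 : EuclideanSpace ℝ (Fin (2*k+3))) 1, ‖t • (s : EuclideanSpace ℝ (Fin (2*k+3)))‖^2 = t^2 := by
    intro s
    rw [norm_smul]; simp
  simp only [a3, integral_mul_const]
  rw [show 2*k+3-1 = (2*k+1)+1 by omega, pow_succ t (2*k+1)]
  simp only [sphereMeasure, smul_eq_mul]
  ring


noncomputable def Gfun (k : ℕ) (c : ℝ) (f : EuclideanSpace ℝ (Fin (2*k+3)) → ℝ) (z : EuclideanSpace ℝ (Fin (2*k+3))) (u : ℝ) : ℝ :=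
  ∫ θ : sphere (0 : EuclideanSpace ℝ (Fin (2*k+3))) 1, Psi k c f (θ, ‖z-θ‖^2 + u) ∂(sphereMeasure (2*k+3))

noncomputable def alph {k : ℕ} (z v : EuclideanSpace ℝ (Fin (2*k+3))) : ℝ := ‖v‖^2 + 2 * inner ℝ z v

noncomputable def Efun (k : ℕ) (c : ℝ) (f : EuclideanSpace ℝ (Fin (2*k+3)) → ℝ) (z : EuclideanSpace ℝ (Fin (2*k+3))) (u : ℝ) : ℝ :=
  c * (2*Real.pi^(k+1)/k.factorial) * ∫ v, f (z+v) * (‖v‖^1)⁻¹ * wgt k ((alph z v - u)/(2*‖v‖))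

lemma Gfun_continuous (k : ℕ) (c : ℝ) (f : EuclideanSpace ℝ (Fin (2*k+3)) → ℝ) (hf : ContDiff ℝ (⊤ : ℕ∞) f) (z : EuclideanSpace ℝ (Fin (2*k+3))) :
    Continuous (Gfun k c f z) := by
  have := continuous_parametric_integral_of_continuous (μ := sphereMeasure (2*k+3)) (s := univ)
    (f := fun (u : ℝ) (θ : sphere (0 : EuclideanSpace ℝ (Fin (2*k+3))) 1) => Psi k c f (θ, ‖z-θ‖^2 + u))
    ((Psi_continuous k c f hf).comp (by fun_prop)) isCompact_univ
  simp only [Measure.restrict_univ] at this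
  exact this

lemma shift_cs {k : ℕ} {f : EuclideanSpace ℝ (Fin (2*k+3)) → ℝ} (hc : HasCompactSupport f) (z : EuclideanSpace ℝ (Fin (2*k+3))) :
    HasCompactSupport (fun v => f (z + v)) := hc.comp_homeomorph (Homeomorph.addLeft z)

lemma alph_continuous {k : ℕ} (z : EuclideanSpace ℝ (Fin (2*k+3))) : Continuous (fun v => alph z v) := by
  unfold alph
  exact (continuous_norm.pow 2).add (continuous_const.mul (continuous_const.inner continuous_id))

lemma ker_measurable (k : ℕ) (z : EuclideanSpace ℝ (Fin (2*k+3))) :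
    Measurable (fun p : EuclideanSpace ℝ (Fin (2*k+3)) × ℝ => wgt k ((alph z p.1 - p.2)/(2*‖p.1‖))) := by
  refine (wgt_measurable k).comp ?_
  have := (alph_continuous z).measurable
  fun_prop

lemma E_prod_integrable (k : ℕ) (f : EuclideanSpace ℝ (Fin (2*k+3)) → ℝ) (hf : Continuous f) (hc : HasCompactSupport f)
    (z : EuclideanSpace ℝ (Fin (2*k+3))) (ψ : ℝ → ℝ) (hψ : Integrable ψ) :
    Integrable (fun p : EuclideanSpace ℝ (Fin (2*k+3)) × ℝ => (f (z+p.1) * (‖p.1‖^1)⁻¹ * ψ p.2) * wgt k ((alph z p.1 - p.2)/(2*‖p.1‖))) (volume.prod volume) := by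
  have h1 := integrable_mul_norm_pow k 1 (fun v => f (z+v)) (by omega) (hf.comp (by fun_prop)) (shift_cs hc z)
  refine (h1.mul_prod hψ).mul_bdd (c := 1) (ker_measurable k z).aestronglyMeasurable
    (Filter.Eventually.of_forall fun p => wgt_le k _)

lemma test_eq (k : ℕ) (c : ℝ) (f : EuclideanSpace ℝ (Fin (2*k+3)) → ℝ) (hf : ContDiff ℝ (⊤ : ℕ∞) f) (hc : HasCompactSupport f)
    (z : EuclideanSpace ℝ (Fin (2*k+3))) (ψ : ℝ → ℝ) (hψ : Continuous ψ) (hψc : HasCompactSupport ψ) :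
    ∫ u, ψ u • Gfun k c f z u = ∫ u, ψ u • Efun k c f z u := by
  have hψi : Integrable ψ := hψ.integrable_of_hasCompactSupport hψc
  have s1 : ∫ u, ψ u • Gfun k c f z u =
      ∫ θ : sphere (0 : EuclideanSpace ℝ (Fin (2*k+3))) 1, (∫ u, Psi k c f (θ, ‖z-θ‖^2 + u) * ψ u) ∂(sphereMeasure (2*k+3)) := by
    rw [← integral_integral_swap_of_hasCompactSupport (f := fun (u : ℝ) (θ : sphere (0 : EuclideanSpace ℝ (Fin (2*k+3))) 1) => Psi k c f (θ, ‖z-θ‖^2 + u) * ψ u)]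
    · refine integral_congr_ae (Filter.Eventually.of_forall fun u => ?_)
      simp only [Gfun, smul_eq_mul, integral_mul_const]
      ring
    · exact ((Psi_continuous k c f hf).comp (by fun_prop)).mul (hψ.comp continuous_fst)
    · refine HasCompactSupport.of_support_subset_isCompact (hψc.isCompact.prod (isCompact_univ)) ?_
      intro p hp
      refine ⟨subset_tsupport _ ?_, mem_univ _⟩
      exact right_ne_zero_of_mul hp
  have s2 : ∫ θ : sphere (0 : EuclideanSpace ℝ (Fin (2*k+3))) 1, (∫ u, Psi k c f (θ, ‖z-θ‖^2 + u) * ψ u) ∂(sphereMeasure (2*k+3))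
      = 2 * c * ∫ v, (∫ θ : sphere (0 : EuclideanSpace ℝ (Fin (2*k+3))) 1, f (z+v) * ψ (alph z v - 2 * inner ℝ (θ : EuclideanSpace ℝ (Fin (2*k+3))) v) ∂(sphereMeasure (2*k+3))) := by
    simp_rw [Psi_test k c f hf hc z _ ψ hψ]
    rw [integral_const_mul]
    congr 1
    refine integral_integral_swap_of_hasCompactSupport (f := fun (θ : sphere (0 : EuclideanSpace ℝ (Fin (2*k+3))) 1) (v : EuclideanSpace ℝ (Fin (2*k+3))) => f (z+v) * ψ (alph z v - 2 * inner ℝ (θ : EuclideanSpace ℝ (Fin (2*k+3))) v)) ?_ ?_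
    · refine (hf.continuous.comp (by fun_prop)).mul (hψ.comp ?_)
      refine ((alph_continuous z).comp continuous_snd).sub (continuous_const.mul ?_)
      exact (continuous_subtype_val.comp continuous_fst).inner continuous_snd
    · refine HasCompactSupport.of_support_subset_isCompact (isCompact_univ.prod (shift_cs hc z).isCompact) ?_
      intro p hp
      refine ⟨mem_univ _, subset_tsupport _ ?_⟩
      exact left_ne_zero_of_mul hp
  have hae : ∀ᵐ v : EuclideanSpace ℝ (Fin (2*k+3)), v ≠ 0 := by
    simp [ae_iff]
  have s3 : ∫ v, (∫ θ : sphere (0 : EuclideanSpace ℝ (Fin (2*k+3))) 1, f (z+v) * ψ (alph z v - 2 * inner ℝ (θ : EuclideanSpace ℝ (Fin (2*k+3))) v) ∂(sphereMeasure (2*k+3)))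
     = ∫ v, (2*Real.pi^(k+1)/k.factorial) / 2 * ∫ u, (f (z+v) * (‖v‖^1)⁻¹ * ψ u) * wgt k ((alph z v - u)/(2*‖v‖)) := by
    refine integral_congr_ae ?_
    filter_upwards [hae] with v hv
    rw [integral_const_mul, slice_u k ψ hψ _ v hv]
    simp_rw [mul_assoc (f (z+v) * _)]
    rw [integral_const_mul, pow_one, mul_inv]
    ring
  have s4 := integral_integral_swap (f := fun (v : EuclideanSpace ℝ (Fin (2*k+3))) (u : ℝ) => (f (z+v) * (‖v‖^1)⁻¹ * ψ u) * wgt k ((alph z v - u)/(2*‖v‖))) (E_prod_integrable k f hf.continuous hc z ψ hψi)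
  rw [s1, s2, s3, integral_const_mul, s4, ← mul_assoc, ← integral_const_mul]
  refine integral_congr_ae (Filter.Eventually.of_forall fun u => ?_)
  simp only [Efun, smul_eq_mul]
  have : ∀ v, f (z+v) * (‖v‖^1)⁻¹ * ψ u * wgt k ((alph z v - u)/(2*‖v‖)) = (f (z+v) * (‖v‖^1)⁻¹ * wgt k ((alph z v - u)/(2*‖v‖))) * ψ u := fun v => by ring
  simp only [this, integral_mul_const]
  ring

lemma Efun_locInt (k : ℕ) (c : ℝ) (f : EuclideanSpace ℝ (Fin (2*k+3)) → ℝ) (hf : Continuous f) (hc : HasCompactSupport f)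
    (z : EuclideanSpace ℝ (Fin (2*k+3))) : LocallyIntegrable (Efun k c f z) := by
  have h1 := integrable_mul_norm_pow k 1 (fun v => f (z+v)) (by omega) (hf.comp (by fun_prop)) (shift_cs hc z)
  have hm : StronglyMeasurable (fun u => ∫ v, f (z+v) * (‖v‖^1)⁻¹ * wgt k ((alph z v - u)/(2*‖v‖))) := by
    refine StronglyMeasurable.integral_prod_left (f := fun (v : EuclideanSpace ℝ (Fin (2*k+3))) (u : ℝ) => f (z+v) * (‖v‖^1)⁻¹ * wgt k ((alph z v - u)/(2*‖v‖))) ?_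
    refine Measurable.stronglyMeasurable ?_
    have h2 := ker_measurable k z
    have h3 : Measurable (fun p : EuclideanSpace ℝ (Fin (2*k+3)) × ℝ => f (z+p.1) * (‖p.1‖^1)⁻¹) := by
      have := hf.measurable
      fun_prop
    exact h3.mul h2
  have hconst : LocallyIntegrable (fun _ : ℝ => ∫ v, ‖f (z+v) * (‖v‖^1)⁻¹‖) := locallyIntegrable_const _
  have h4 : LocallyIntegrable (fun u => ∫ v, f (z+v) * (‖v‖^1)⁻¹ * wgt k ((alph z v - u)/(2*‖v‖))) := by
    refine hconst.mono hm.aestronglyMeasurable (Filter.Eventually.of_forall fun u => ?_)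
    refine (norm_integral_le_integral_norm _).trans ?_
    refine le_trans ?_ (le_abs_self _)
    refine integral_mono_of_nonneg (Filter.Eventually.of_forall fun v => norm_nonneg _) h1.norm (Filter.Eventually.of_forall fun v => ?_)
    simp only
    rw [norm_mul]
    exact mul_le_of_le_one_right (norm_nonneg _) (wgt_le k _)
  exact h4.smul (c * (2*Real.pi^(k+1)/k.factorial))

lemma G_ae_eq_E (k : ℕ) (c : ℝ) (f : EuclideanSpace ℝ (Fin (2*k+3)) → ℝ) (hf : ContDiff ℝ (⊤ : ℕ∞) f) (hc : HasCompactSupport f)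
    (z : EuclideanSpace ℝ (Fin (2*k+3))) : ∀ᵐ u, Gfun k c f z u = Efun k c f z u :=
  ae_eq_of_integral_contDiff_smul_eq (Gfun_continuous k c f hf z).locallyIntegrable (Efun_locInt k c f hf.continuous hc z)
    (fun ψ hψ hψc => test_eq k c f hf hc z ψ hψ.continuous hψc)


noncomputable def Pint (k : ℕ) (f : EuclideanSpace ℝ (Fin (2*k+3)) → ℝ) (z : EuclideanSpace ℝ (Fin (2*k+3))) (u : ℝ)
    (v : EuclideanSpace ℝ (Fin (2*k+3))) : ℝ :=
  (f (z+v) * ((4*‖v‖^2 - (alph z v - u)^2)/4)^k) * (‖v‖^(2*k+1))⁻¹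

noncomputable def Pfun (k : ℕ) (c : ℝ) (f : EuclideanSpace ℝ (Fin (2*k+3)) → ℝ) (z : EuclideanSpace ℝ (Fin (2*k+3))) (u : ℝ) : ℝ :=
  c * (2*Real.pi^(k+1)/k.factorial) * ∫ v, Pint k f z u v

lemma Pint_integrable (k : ℕ) (f : EuclideanSpace ℝ (Fin (2*k+3)) → ℝ) (hf : Continuous f) (hc : HasCompactSupport f)
    (z : EuclideanSpace ℝ (Fin (2*k+3))) (u : ℝ) : Integrable (Pint k f z u) := by
  unfold Pint
  refine integrable_mul_norm_pow k (2*k+1) (fun v => f (z+v) * ((4*‖v‖^2 - (alph z v - u)^2)/4)^k) (by omega) ?_ ((shift_cs hc z).mul_right)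
  have := alph_continuous z
  fun_prop

lemma Pfun_continuous (k : ℕ) (c : ℝ) (f : EuclideanSpace ℝ (Fin (2*k+3)) → ℝ) (hf : Continuous f) (hc : HasCompactSupport f)
    (z : EuclideanSpace ℝ (Fin (2*k+3))) : Continuous (Pfun k c f z) := by
  unfold Pfun
  refine continuous_const.mul ?_
  rw [continuous_iff_continuousAt]
  intro u₀
  have ha := alph_continuous z
  refine continuousAt_of_dominated (bound := fun v => (‖f (z+v)‖ * ((4*‖v‖^2 + 2*(alph z v)^2 + 2*(|u₀|+1)^2)/4)^k) * (‖v‖^(2*k+1))⁻¹) ?_ ?_ ?_ ?_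
  · exact Filter.Eventually.of_forall fun u => (Pint_integrable k f hf hc z u).aestronglyMeasurable
  · filter_upwards [ball_mem_nhds u₀ one_pos] with u hu
    refine Filter.Eventually.of_forall fun v => ?_
    have hu1 : |u| ≤ |u₀| + 1 := by
      have h1 : |u - u₀| < 1 := by simpa [Real.dist_eq] using hu
      have h2 := abs_sub_abs_le_abs_sub u u₀
      linarith
    have hu2 : u^2 ≤ (|u₀|+1)^2 := by
      rw [← sq_abs u]; gcongr
    unfold Pint
    rw [norm_mul, norm_mul, norm_pow, norm_inv, norm_pow, norm_norm]
    gcongr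
    rw [Real.norm_eq_abs, abs_le]
    constructor
    · nlinarith [sq_nonneg (alph z v + u), sq_nonneg ‖v‖]
    · nlinarith [sq_nonneg (alph z v - u), sq_nonneg (alph z v), sq_nonneg (|u₀|+1)]
  · refine integrable_mul_norm_pow k (2*k+1) (fun v => ‖f (z+v)‖ * ((4*‖v‖^2 + 2*(alph z v)^2 + 2*(|u₀|+1)^2)/4)^k) (by omega) ?_ ((shift_cs hc z).norm.mul_right)
    fun_prop
  · refine Filter.Eventually.of_forall fun v => ?_
    unfold Pint
    fun_prop

lemma Pint_eq (k : ℕ) (f : EuclideanSpace ℝ (Fin (2*k+3)) → ℝ) (z : EuclideanSpace ℝ (Fin (2*k+3))) (u : ℝ)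
    (v : EuclideanSpace ℝ (Fin (2*k+3))) : Pint k f z u v = f (z+v) * (‖v‖^1)⁻¹ * (1 - ((alph z v - u)/(2*‖v‖))^2)^k := by
  unfold Pint
  rcases eq_or_ne v 0 with rfl | hv
  · simp
  have hr : ‖v‖ ≠ 0 := (norm_pos_iff.2 hv).ne'
  have : (4*‖v‖^2 - (alph z v - u)^2)/4 = ‖v‖^2 * (1 - ((alph z v - u)/(2*‖v‖))^2) := by
    field_simp
    ring
  rw [this, mul_pow]
  field_simp
  ring

lemma Pfun_findiff (k : ℕ) (c : ℝ) (f : EuclideanSpace ℝ (Fin (2*k+3)) → ℝ) (hf : Continuous f) (hc : HasCompactSupport f)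
    (z : EuclideanSpace ℝ (Fin (2*k+3))) (h : ℝ) :
    ∑ i ∈ Finset.range (2*k+1), ((-1:ℝ)^(2*k-i) * ((2*k).choose i)) * Pfun k c f z (i*h)
      = (2*k).factorial * h^(2*k) * (c * (2*Real.pi^(k+1)/k.factorial) * (-1/4)^k * newt k f z) := by
  have e1 : ∑ i ∈ Finset.range (2*k+1), ((-1:ℝ)^(2*k-i) * ((2*k).choose i)) * Pfun k c f z (i*h)
      = c * (2*Real.pi^(k+1)/k.factorial) * ∫ v, ∑ i ∈ Finset.range (2*k+1), ((-1:ℝ)^(2*k-i) * ((2*k).choose i)) * Pint k f z (i*h) v := by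
    rw [integral_finsetSum _ fun i _ => (Pint_integrable k f hf hc z _).const_mul _, Finset.mul_sum]
    refine Finset.sum_congr rfl fun i _ => ?_
    rw [integral_const_mul, Pfun]
    ring
  have e2 : ∀ v, ∑ i ∈ Finset.range (2*k+1), ((-1:ℝ)^(2*k-i) * ((2*k).choose i)) * Pint k f z (i*h) v
      = (2*k).factorial * h^(2*k) * (-1/4)^k * (f (z+v) * (‖v‖^(2*k+1))⁻¹) := by
    intro v
    have h1 := findiff_kernel k (alph z v) ‖v‖ h
    simp_rw [Pint_eq]
    calc _ = f (z+v) * (‖v‖^1)⁻¹ * ∑ i ∈ Finset.range (2*k+1), ((-1:ℝ)^(2*k-i) * ((2*k).choose i)) * (1 - ((alph z v - i*h)/(2*‖v‖))^2)^k := by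
          rw [Finset.mul_sum]; exact Finset.sum_congr rfl fun i _ => by ring
      _ = _ := by
          rw [h1, pow_succ ‖v‖ (2*k), mul_inv, pow_one]
          ring
  rw [e1]
  simp_rw [e2]
  rw [integral_const_mul, newt]
  ring

lemma alph_le {k : ℕ} (z v : EuclideanSpace ℝ (Fin (2*k+3))) (hzv : ‖z+v‖ ≤ 1) : |alph z v| ≤ ‖v‖ * (1 + ‖z‖) := by
  have h1 : alph z v = inner ℝ v (z + v + z) := by
    unfold alph
    rw [inner_add_right, inner_add_right, real_inner_self_eq_norm_sq, real_inner_comm v z]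
    ring
  rw [h1]
  refine (abs_real_inner_le_norm _ _).trans ?_
  gcongr
  refine (norm_add_le _ _).trans ?_
  linarith

lemma E_sub_P (k : ℕ) (c : ℝ) (f : EuclideanSpace ℝ (Fin (2*k+3)) → ℝ) (hf : Continuous f) (hc : HasCompactSupport f)
    (hsupp : tsupport f ⊆ ball 0 1)
    (z : EuclideanSpace ℝ (Fin (2*k+3))) (hz : ‖z‖ < 1) :
    ∃ C : ℝ, ∀ u, |u| ≤ 1 → |Efun k c f z u - Pfun k c f z u| ≤ C * |u|^(2*k+1) := by
  obtain ⟨A, hA⟩ := hf.bounded_above_of_compact_support hc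
  have hA0 : 0 ≤ A := (norm_nonneg _).trans (hA 0)
  set κ : ℝ := (1 - ‖z‖)⁻¹ with hκ
  have hz1 : 0 < 1 - ‖z‖ := by linarith
  have hκ0 : 0 < κ := inv_pos.2 hz1
  set M : ℝ := κ^2 + (2*κ+1)^2/4 with hM
  have hM0 : 0 ≤ M := by positivity
  have hJ : Integrable ((ball (0 : EuclideanSpace ℝ (Fin (2*k+3))) κ).indicator (fun v => (‖v‖^(2*k+2))⁻¹)) := by
    rw [integrable_indicator_iff measurableSet_ball]
    exact ((locInt_norm_pow k (2*k+2) le_rfl).integrableOn_isCompact (isCompact_closedBall 0 κ)).mono_set ball_subset_closedBall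
  set J := ∫ v, (ball (0 : EuclideanSpace ℝ (Fin (2*k+3))) κ).indicator (fun v => (‖v‖^(2*k+2))⁻¹) v with hJdef
  have key : ∀ u, |u| ≤ 1 → ∀ v, |f (z+v) * (‖v‖^1)⁻¹ * wgt k ((alph z v - u)/(2*‖v‖)) - Pint k f z u v| ≤
      (A * M^k * κ * |u|^(2*k+1)) * (ball (0 : EuclideanSpace ℝ (Fin (2*k+3))) κ).indicator (fun v => (‖v‖^(2*k+2))⁻¹) v := by
    intro u hu v
    have hrhs : 0 ≤ (A * M^k * κ * |u|^(2*k+1)) * (ball (0 : EuclideanSpace ℝ (Fin (2*k+3))) κ).indicator (fun v => (‖v‖^(2*k+2))⁻¹) v := by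
      refine mul_nonneg (by positivity) (indicator_nonneg (fun v _ => by positivity) _)
    by_cases hs : (alph z v - u)/(2*‖v‖) ∈ Icc (-1:ℝ) 1
    · rw [Pint_eq, wgt, indicator_of_mem hs, sub_self, abs_zero]
      exact hrhs
    rw [wgt, indicator_of_notMem hs, mul_zero, zero_sub, abs_neg]
    by_cases hfz : f (z+v) = 0
    · rw [Pint, hfz]; simpa using hrhs
    have hzv : ‖z+v‖ ≤ 1 := by
      have := hsupp (subset_tsupport _ hfz)
      rw [mem_ball_zero_iff] at this
      exact this.le
    rcases eq_or_ne v 0 with rfl | hv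
    · simpa [Pint] using hrhs
    have hr : 0 < ‖v‖ := norm_pos_iff.2 hv
    have hα := alph_le z v hzv
    have h1 : 2*‖v‖ < |alph z v - u| := by
      by_contra hcon
      apply hs
      rw [mem_Icc, ← abs_le, abs_div, abs_of_pos (show 0 < 2*‖v‖ by positivity), div_le_one (by positivity)]
      exact not_lt.1 hcon
    have h2 : |alph z v - u| ≤ |alph z v| + |u| := abs_sub _ _
    have h3 : ‖v‖ * (1 - ‖z‖) < |u| := by nlinarith
    have h4 : ‖v‖ < κ * |u| := by
      rw [hκ, inv_mul_eq_div, lt_div_iff₀ hz1]; exact h3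
    have h5 : ‖v‖ < κ := h4.trans_le (mul_le_of_le_one_right hκ0.le hu)
    have hvb : v ∈ ball (0 : EuclideanSpace ℝ (Fin (2*k+3))) κ := by simpa using h5
    rw [indicator_of_mem hvb, Pint, abs_mul, abs_mul, abs_pow, abs_inv, abs_pow, abs_norm]
    have h6 : |alph z v - u| ≤ (2*κ+1) * |u| := by nlinarith
    have hq : |(4*‖v‖^2 - (alph z v - u)^2)/4| ≤ M * |u|^2 := by
      have a1 : ‖v‖^2 ≤ (κ*|u|)^2 := by gcongr
      have a2 : (alph z v - u)^2 ≤ ((2*κ+1) * |u|)^2 := by rw [← sq_abs (alph z v - u)]; gcongr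
      rw [abs_le, hM]
      constructor <;> nlinarith [sq_nonneg ‖v‖, sq_nonneg (alph z v - u)]
    calc |f (z+v)| * |(4*‖v‖^2 - (alph z v - u)^2)/4|^k * (‖v‖^(2*k+1))⁻¹
        ≤ A * (M * |u|^2)^k * (κ * |u| * (‖v‖^(2*k+2))⁻¹) := by
          refine mul_le_mul (mul_le_mul (hA _) (pow_le_pow_left₀ (abs_nonneg _) hq k) (by positivity) hA0) ?_ (by positivity) (by positivity)
          have : (‖v‖^(2*k+1))⁻¹ = ‖v‖ * (‖v‖^(2*k+2))⁻¹ := by field_simp; ring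
          rw [this]
          gcongr
      _ = _ := by
          rw [mul_pow, ← pow_mul]; ring
  refine ⟨|c * (2*Real.pi^(k+1)/k.factorial)| * (A * M^k * κ * J), fun u hu => ?_⟩
  have hEi : Integrable (fun v => f (z+v) * (‖v‖^1)⁻¹ * wgt k ((alph z v - u)/(2*‖v‖))) := by
    have h1 := integrable_mul_norm_pow k 1 (fun v => f (z+v)) (by omega) (hf.comp (by fun_prop)) (shift_cs hc z)
    exact h1.mul_bdd (c := 1) ((ker_measurable k z).comp (measurable_id.prodMk measurable_const)).aestronglyMeasurable (Filter.Eventually.of_forall fun p => wgt_le k _)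
  rw [Efun, Pfun, ← mul_sub, ← integral_sub hEi (Pint_integrable k f hf hc z u), abs_mul, mul_assoc |c * _|]
  refine mul_le_mul_of_nonneg_left ?_ (abs_nonneg _)
  have := norm_integral_le_of_norm_le (f := fun v => f (z+v) * (‖v‖^1)⁻¹ * wgt k ((alph z v - u)/(2*‖v‖)) - Pint k f z u v) (hJ.const_mul (A * M^k * κ * |u|^(2*k+1))) (Filter.Eventually.of_forall (key u hu))
  rw [integral_const_mul, ← hJdef] at this
  refine this.trans (le_of_eq ?_)
  ring

lemma G_sub_P (k : ℕ) (c : ℝ) (f : EuclideanSpace ℝ (Fin (2*k+3)) → ℝ) (hf : ContDiff ℝ (⊤ : ℕ∞) f) (hc : HasCompactSupport f)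
    (hsupp : tsupport f ⊆ ball 0 1)
    (z : EuclideanSpace ℝ (Fin (2*k+3))) (hz : ‖z‖ < 1) :
    ∃ C : ℝ, ∀ u, |u| < 1 → |Gfun k c f z u - Pfun k c f z u| ≤ C * |u|^(2*k+1) := by
  obtain ⟨C, hC⟩ := E_sub_P k c f hf.continuous hc hsupp z hz
  refine ⟨C, fun u hu => ?_⟩
  by_contra hcon
  let U : Set ℝ := {u | |u| < 1} ∩ {u | C * |u|^(2*k+1) < |Gfun k c f z u - Pfun k c f z u|}
  have hG := Gfun_continuous k c f hf z
  have hP := Pfun_continuous k c f hf.continuous hc z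
  have hUo : IsOpen U := (isOpen_lt (by fun_prop) continuous_const).inter
    (isOpen_lt (by fun_prop) (hG.sub hP).abs)
  have hpos := hUo.measure_pos volume ⟨u, hu, not_le.1 hcon⟩
  have hnull : volume U = 0 := by
    refine measure_mono_null ?_ (ae_iff.1 (G_ae_eq_E k c f hf hc z))
    intro s hs heq
    have h1 := hC s (le_of_lt hs.1)
    rw [← heq] at h1
    exact absurd h1 (not_le.2 hs.2)
  exact hpos.ne' hnull

theorem main_identity (k : ℕ) (c : ℝ) (f : EuclideanSpace ℝ (Fin (2*k+3)) → ℝ) (hf : ContDiff ℝ (⊤ : ℕ∞) f) (hc : HasCompactSupport f)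
    (hsupp : tsupport f ⊆ ball 0 1)
    (z : EuclideanSpace ℝ (Fin (2*k+3))) (hz : ‖z‖ < 1) :
    ∫ θ : sphere (0 : EuclideanSpace ℝ (Fin (2*k+3))) 1, (DTau^[2*k] (Psi k c f)) (θ, ‖z-θ‖^2) ∂(sphereMeasure (2*k+3))
      = (2*k).factorial * (c * (2*Real.pi^(k+1)/k.factorial) * (-1/4)^k * newt k f z) := by
  obtain ⟨C', hC'⟩ := G_sub_P k c f hf hc hsupp z hz
  have hδ : ∀ θ : sphere (0 : EuclideanSpace ℝ (Fin (2*k+3))) 1, (1-‖z‖)^2 ≤ ‖z-θ‖^2 := by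
    intro θ
    have h1 : ‖(θ : EuclideanSpace ℝ (Fin (2*k+3)))‖ = 1 := by simp
    have h2 := norm_sub_norm_le (θ : EuclideanSpace ℝ (Fin (2*k+3))) z
    rw [h1, norm_sub_rev] at h2
    have : 0 ≤ 1 - ‖z‖ := by linarith
    gcongr
  obtain ⟨C, a, ha, hT⟩ := G_taylor (fun θ : sphere (0 : EuclideanSpace ℝ (Fin (2*k+3))) 1 => ‖z-θ‖^2) (by fun_prop) ((1-‖z‖)^2)
    (by have : 0 < 1 - ‖z‖ := by linarith
        positivity) hδ (Psi k c f) (Psi_contDiffOn k c f hf) (2*k)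
  rw [← ha]
  refine top_coeff (2*k) (Gfun k c f z) (Pfun k c f z) a _ C C' (1/2) (by norm_num) hT (Pfun_findiff k c f hf.continuous hc z) ?_
  intro u hu
  have := hC' u (by rw [abs_of_nonneg hu.1]; linarith [hu.2])
  rwa [abs_of_nonneg hu.1] at this


lemma gamma_half (k : ℕ) : Real.Gamma ((k:ℝ) + 3/2) = √Real.pi * (2*k+1).factorial / (2 * 4^k * k.factorial) := by
  induction k with
  | zero =>
    have := Real.Gamma_add_one (s := 1/2) (by norm_num)
    rw [Real.Gamma_one_half_eq] at this
    norm_num at this ⊢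
    rw [this]; ring
  | succ k ih =>
    have := Real.Gamma_add_one (s := (k:ℝ)+3/2) (by positivity)
    rw [ih] at this
    have e : ((k+1:ℕ):ℝ) + 3/2 = (k:ℝ)+3/2+1 := by push_cast; ring
    rw [e, this, show 2*(k+1)+1 = (2*k+1)+1+1 by ring, Nat.factorial_succ (2*k+1+1), Nat.factorial_succ (2*k+1), Nat.factorial_succ k]
    push_cast
    field_simp
    ring

lemma mass_sphere (n : ℕ) (hn : 0 < n) : (sphereMeasure n).real univ = 2 * Real.pi ^ ((n : ℝ) / 2) / Real.Gamma ((n : ℝ) / 2) := by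
  haveI : Nonempty (Fin n) := ⟨⟨0, hn⟩⟩
  have hn' : (0:ℝ) < n := by exact_mod_cast hn
  unfold sphereMeasure
  rw [Measure.toSphere_real_apply_univ, measureReal_def, EuclideanSpace.volume_ball, Real.Gamma_add_one]
  · have hG : 0 < Real.Gamma ((n:ℝ)/2) := Real.Gamma_pos_of_pos (by positivity)
    have hp : √Real.pi ^ n = Real.pi ^ ((n:ℝ)/2) := by
      rw [Real.sqrt_eq_rpow, ← Real.rpow_natCast, ← Real.rpow_mul Real.pi_pos.le]
      congr 1; ring
    simp only [finrank_euclideanSpace, Fintype.card_fin]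
    rw [ENNReal.toReal_mul, ENNReal.toReal_pow, ENNReal.toReal_ofReal zero_le_one, ENNReal.toReal_ofReal (by positivity), hp]
    field_simp
    exact one_pow n
  · simp [Fintype.card_fin]; omega

lemma lap_congr {n : ℕ} {F G : EuclideanSpace ℝ (Fin n) → ℝ} {x : EuclideanSpace ℝ (Fin n)} (h : F =ᶠ[nhds x] G) :
    lap F x = lap G x := by
  unfold lap
  rw [(h.iteratedFDeriv ℝ 2).eq_of_nhds]

lemma final_const (k : ℕ) : 4 * Real.pi ^ (((2*k+3:ℕ) : ℝ) / 2 - 1) * Real.Gamma (((2*k+3:ℕ) : ℝ) / 2)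
    = 2 * Real.pi^(k+1) * (2*k+1).factorial / (4^k * k.factorial) := by
  have e : ((2*k+3:ℕ) : ℝ) / 2 = (k:ℝ) + 3/2 := by push_cast; ring
  have e2 : Real.pi ^ ((k:ℝ) + 3/2 - 1) = Real.pi^k * √Real.pi := by
    rw [show (k:ℝ) + 3/2 - 1 = k + 1/2 by ring, Real.rpow_add Real.pi_pos, Real.rpow_natCast, Real.sqrt_eq_rpow]
  rw [e, gamma_half, e2]
  have : √Real.pi * √Real.pi = Real.pi := Real.mul_self_sqrt Real.pi_pos.le
  calc _ = 2 * Real.pi^k * (√Real.pi * √Real.pi) * (2*k+1).factorial / (4^k * k.factorial) := by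
        field_simp; ring
    _ = _ := by rw [this]; ring

lemma final_aux (k : ℕ) 
    (f : EuclideanSpace ℝ (Fin (2*k+3)) → ℝ)
    (hf : ContDiff ℝ (⊤ : ℕ∞) f) (hfc : HasCompactSupport f)
    (hsupp : tsupport f ⊆ ball (0 : EuclideanSpace ℝ (Fin (2*k+3))) 1)
    (c : ℝ) (hc : c = 1 / (2 * Real.pi ^ (((2*k+3:ℕ) : ℝ) / 2) / Real.Gamma (((2*k+3:ℕ) : ℝ) / 2)))
    (φ : EuclideanSpace ℝ (Fin (2*k+3)) → ℝ → ℝ)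
    (hφ : ∀ θ : EuclideanSpace ℝ (Fin (2*k+3)), ∀ t : ℝ,
      φ θ t = c *
        ∫ σ : sphere (0 : EuclideanSpace ℝ (Fin (2*k+3))) 1,
          f (θ - t • (σ : EuclideanSpace ℝ (Fin (2*k+3)))) ∂(sphereMeasure (2*k+3)))
    (g : EuclideanSpace ℝ (Fin (2*k+3)) → ℝ → ℝ)
    (hg : ∀ θ : EuclideanSpace ℝ (Fin (2*k+3)), ∀ t : ℝ,
      g θ t = Dop^[2*k] (fun s => s ^ (2*k+1) * φ θ s) t)
    (x : EuclideanSpace ℝ (Fin (2*k+3))) (hx : x ∈ ball (0 : EuclideanSpace ℝ (Fin (2*k+3))) 1) :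
    f x = ((-1 : ℝ) ^ (k+1) /
            (4 * Real.pi ^ (((2*k+3:ℕ) : ℝ) / 2 - 1) * Real.Gamma (((2*k+3:ℕ) : ℝ) / 2))) *
      lap (fun z => ∫ θ : sphere (0 : EuclideanSpace ℝ (Fin (2*k+3))) 1,
            g (θ : EuclideanSpace ℝ (Fin (2*k+3))) ‖z - (θ : EuclideanSpace ℝ (Fin (2*k+3)))‖
          ∂(sphereMeasure (2*k+3))) x := by
  set C0 : ℝ := (2*k).factorial * (c * (2*Real.pi^(k+1)/k.factorial) * (-1/4)^k) with hC0
  have h1 : (fun z => ∫ θ : sphere (0 : EuclideanSpace ℝ (Fin (2*k+3))) 1,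
            g (θ : EuclideanSpace ℝ (Fin (2*k+3))) ‖z - (θ : EuclideanSpace ℝ (Fin (2*k+3)))‖
          ∂(sphereMeasure (2*k+3))) =ᶠ[nhds x] newt k (fun y => C0 * f y) := by
    filter_upwards [isOpen_ball.mem_nhds hx] with z hz
    have hz' : ‖z‖ < 1 := by simpa using hz
    have h2 : newt k (fun y => C0 * f y) z = C0 * newt k f z := by
      unfold newt
      rw [← integral_const_mul]
      congr 1; ext v; ring
    rw [h2]
    have h3 := main_identity k c f hf hfc hsupp z hz'
    calc _ = ∫ θ : sphere (0 : EuclideanSpace ℝ (Fin (2*k+3))) 1, (DTau^[2*k] (Psi k c f)) ((θ : EuclideanSpace ℝ (Fin (2*k+3))), ‖z-(θ : EuclideanSpace ℝ (Fin (2*k+3)))‖^2) ∂sphereMeasure (2*k+3) := by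
          congr 1; ext θ
          rw [hg]
          refine Dop_iter (Psi k c f) (Psi_contDiffOn k c f hf) (θ : EuclideanSpace ℝ (Fin (2*k+3))) _ ?_ (2*k) _ ?_
          · intro t ht
            simp only [Psi, hφ, Real.sqrt_sq ht.le]
          · rw [norm_pos_iff, sub_ne_zero]
            rintro rfl
            have : ‖(θ : EuclideanSpace ℝ (Fin (2*k+3)))‖ = 1 := by simpa using θ.2
            linarith
      _ = _ := by rw [h3, hC0]; ring
  rw [lap_congr h1, lap_newt_eq k (fun y => C0 * f y) (contDiff_const.mul (by exact_mod_cast contDiff_infty.1 hf 2)) hfc.mul_left, final_const,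
    mass_sphere _ (by omega), hC0]
  have hM : c * (2 * Real.pi ^ (((2*k+3:ℕ) : ℝ) / 2) / Real.Gamma (((2*k+3:ℕ) : ℝ) / 2)) = 1 := by
    rw [hc]
    refine one_div_mul_cancel ?_
    have : 0 < Real.Gamma (((2*k+3:ℕ) : ℝ) / 2) := Real.Gamma_pos_of_pos (by positivity)
    have := Real.pi_pos
    positivity
  set M := (2 * Real.pi ^ (((2*k+3:ℕ) : ℝ) / 2) / Real.Gamma (((2*k+3:ℕ) : ℝ) / 2))
  have hs : (-1:ℝ)^(k+1) * (-1/4)^k = -(1/4^k) := by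
    rw [div_pow, pow_succ]
    have : (-1:ℝ)^k * (-1)^k = 1 := by rw [← mul_pow]; simp
    linear_combination (-1/4^k) * this
  have hpi := Real.pi_pos
  have hfac : ((2*k+1).factorial : ℝ) = (2*k+1) * (2*k).factorial := by
    rw [Nat.factorial_succ]; push_cast; ring
  rw [hfac]
  symm
  calc _ = (c*M) * ((-1:ℝ)^(k+1) * (-1/4)^k) * (-(4^k)) * f x * (((2*k).factorial/(2*k).factorial) * ((2*k+1)/(2*k+1:ℝ)) * (Real.pi^(k+1)/Real.pi^(k+1)) * ((k.factorial:ℝ)/k.factorial)) := by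
        field_simp
    _ = _ := by
        rw [hM, hs, div_self (by positivity), div_self (by positivity), div_self (by positivity), div_self (by positivity)]
        field_simp

end Aux

/-- Finch–Patch–Rakesh inversion formula, odd dimensions. -/
theorem spherical_mean_inversion_odd
    (n : ℕ) (hn3 : 3 ≤ n) (hodd : Odd n)
    (f : EuclideanSpace ℝ (Fin n) → ℝ)
    (hf : ContDiff ℝ (⊤ : ℕ∞) f) (hfc : HasCompactSupport f)
    (hsupp : tsupport f ⊆ ball (0 : EuclideanSpace ℝ (Fin n)) 1)
    -- spherical means `φ_θ(t) = (Mf)(θ,t)`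
    (φ : EuclideanSpace ℝ (Fin n) → ℝ → ℝ)
    (hφ : ∀ θ : EuclideanSpace ℝ (Fin n), ∀ t : ℝ,
      φ θ t = (1 / (2 * Real.pi ^ ((n : ℝ) / 2) / Real.Gamma ((n : ℝ) / 2))) *
        ∫ σ : sphere (0 : EuclideanSpace ℝ (Fin n)) 1,
          f (θ - t • (σ : EuclideanSpace ℝ (Fin n))) ∂(sphereMeasure n))
    -- `g_θ(t) = D^{n-3}[t ↦ t^{n-2} φ_θ(t)](t)`
    (g : EuclideanSpace ℝ (Fin n) → ℝ → ℝ)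
    (hg : ∀ θ : EuclideanSpace ℝ (Fin n), ∀ t : ℝ,
      g θ t = Dop^[n - 3] (fun s => s ^ (n - 2) * φ θ s) t)
    (x : EuclideanSpace ℝ (Fin n)) (hx : x ∈ ball (0 : EuclideanSpace ℝ (Fin n)) 1) :
    f x = ((-1 : ℝ) ^ ((n - 1) / 2) /
            (4 * Real.pi ^ ((n : ℝ) / 2 - 1) * Real.Gamma ((n : ℝ) / 2))) *
      lap (fun z => ∫ θ : sphere (0 : EuclideanSpace ℝ (Fin n)) 1,
            g (θ : EuclideanSpace ℝ (Fin n)) ‖z - (θ : EuclideanSpace ℝ (Fin n))‖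
          ∂(sphereMeasure n)) x := by
  obtain ⟨k, rfl⟩ : ∃ k, n = 2*k+3 := by
    obtain ⟨m, rfl⟩ := hodd
    exact ⟨m-1, by omega⟩
  have e : (2*k+3-1)/2 = k+1 := by omega
  rw [e]
  exact final_aux k f hf hfc hsupp _ rfl φ hφ g hg x hx
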